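/- arXiv:0910.2960 — 2 statements merged into one kernel-verified Lean document; each statement's English description precedes it below -/
import Mathlib

section
/- Assume that the Hardy–Littlewood prime pair conjecture holds uniformly for 2 ≤ d ≤ (log x)²; i.e., for every ε > 0 there exists x₀ such that for all x ≥ x₀ and all even integers d with 2 ≤ d ≤ (log x)² one has |π₂(x,d) − 𝔖(d)·x/(log x)²| ≤ ε·𝔖(d)·x/(log x)². Then for every prime p there exists X such that for all x ≥ X, every jumping champion d* for x is divisible by p. -/
open Filter Real

/-- The `n`-th prime, 1-indexed: `nthPrime 1 = 2`, `nthPrime 2 = 3`, ... -/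
noncomputable def nthPrime (n : ℕ) : ℕ := Nat.nth Nat.Prime (n - 1)

/-- `N x d` is the number of indices `n ≥ 2` with `pₙ ≤ x` and `pₙ - pₙ₋₁ = d`. -/
noncomputable def N (x : ℝ) (d : ℕ) : ℕ :=
  Set.ncard {n : ℕ | 2 ≤ n ∧ (nthPrime n : ℝ) ≤ x ∧ nthPrime n - nthPrime (n - 1) = d}

/-- `N* x`, the maximal number of occurrences of any gap among consecutive primes up to `x`. -/
noncomputable def Nstar (x : ℝ) : ℕ := sSup (Set.range fun d => N x d)

/-- A positive integer `d` is a jumping champion for `x` if `N x d` attains `max_d N x d`. -/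
def JumpingChampion (x : ℝ) (d : ℕ) : Prop := 0 < d ∧ ∀ e : ℕ, N x e ≤ N x d

/-- `pi2 x d` counts primes `q ≤ x` such that `q - d` is also prime. -/
noncomputable def pi2 (x : ℝ) (d : ℕ) : ℕ :=
  Set.ncard {q : ℕ | q.Prime ∧ (q : ℝ) ≤ x ∧ (q - d).Prime}

/-- `pi3 x d d'` counts primes `q ≤ x` such that `q - d` and `q - d'` are both prime. -/
noncomputable def pi3 (x : ℝ) (d d' : ℕ) : ℕ :=
  Set.ncard {q : ℕ | q.Prime ∧ (q : ℝ) ≤ x ∧ (q - d).Prime ∧ (q - d').Prime}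

/-- The twin prime constant `C₂ = ∏_{p > 2} (1 - 1/(p-1)²)`. -/
noncomputable def C2 : ℝ := ∏' q : {q : ℕ // q.Prime ∧ 2 < q}, (1 - 1 / ((q : ℕ) - 1 : ℝ) ^ 2)

/-- The singular series `𝔖(d)`. -/
noncomputable def singularSeries (d : ℕ) : ℝ :=
  if Even d then
    2 * C2 * ∏ q ∈ d.primeFactors.filter (fun q => 2 < q), ((q : ℝ) - 1) / ((q : ℝ) - 2)
  else 0

/-- `nu d' d q` is the number of distinct residue classes mod `q` occupied by `{0, d', d}`. -/
def nu (d' d : ℕ) (q : ℕ) : ℕ :=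
  ({(0 : ZMod q), (d' : ZMod q), (d : ZMod q)} : Finset (ZMod q)).card

/-- The singular series of the triple `{0, d', d}`. -/
noncomputable def tripleSingularSeries (d' d : ℕ) : ℝ :=
  ∏' q : Nat.Primes, ((1 - 1 / ((q : ℕ) : ℝ)) ^ 3)⁻¹ * (1 - (nu d' d q : ℝ) / ((q : ℕ) : ℝ))

/-- The `k`-th primorial, the product of the first `k` primes. -/
noncomputable def primorialN (k : ℕ) : ℕ := ∏ i ∈ Finset.range k, Nat.nth Nat.Prime i

/-- The index `n` of the largest primorial `𝒫ₙ ≤ y`. -/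
noncomputable def primorialFloorIndex (y : ℝ) : ℕ := sSup {n : ℕ | (primorialN n : ℝ) ≤ y}

/-- Chebyshev's theta function `ϑ(t) = ∑_{p ≤ t} log p`. -/
noncomputable def theta (t : ℝ) : ℝ :=
  ∑ q ∈ (Finset.range (⌊t⌋₊ + 1)).filter Nat.Prime, Real.log q

/-!
If `p ∤ d`, the singular series `𝔖(d)` is smaller than that of a large primorial `P` by a factor
close to `(p - 2) / (p - 1)`: among the primes up to `z` the factor at `p` is missing, and the prime
factors of `d ≤ (log x)²` beyond `z ≍ log log x` contribute a factor `1 + o(1)`. So `P` beats `d` in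
the number of prime pairs. It also beats `d` in the number of consecutive primes: each pair of
primes at distance `P` that is not consecutive belongs to a triple `q - P`, `q - a`, `q`, and a
sieve shows that these triples are rare as long as `P` is at most a small power of `log x`. Odd `d`
and `d > (log x)²` occur too rarely to compete, because `𝔖(P) → ∞`.

The sieve is a dual large sieve: modulo each prime take the mean-zero function that is constant on
the admissible residue classes. Products of these functions over distinct sets of primes are nearly
orthogonal, so their sum has small mean square, whereas it is large at every sifted integer.
-/

section PeriodicAverages

variable {R : Type*} [CommSemiring R]

theorem sum_range_mul_of_coprime_of_periodic {m k : ℕ} (hmk : m.Coprime k) (hm : 0 < m)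
    (hk : 0 < k) {u v : ℕ → R} (hu : Function.Periodic u m) (hv : Function.Periodic v k) :
    ∑ n ∈ Finset.range (m * k), u n * v n =
      (∑ n ∈ Finset.range m, u n) * ∑ n ∈ Finset.range k, v n := by
  rw [Finset.sum_mul_sum, ← Finset.sum_product']
  have hmaps : Set.MapsTo (fun n : ℕ => (n % m, n % k)) (Finset.range (m * k) : Set ℕ)
      ((Finset.range m ×ˢ Finset.range k : Finset (ℕ × ℕ)) : Set (ℕ × ℕ)) := by
    intro n _
    simp [Nat.mod_lt _ hm, Nat.mod_lt _ hk]
  have hinj : Set.InjOn (fun n : ℕ => (n % m, n % k)) (Finset.range (m * k) : Set ℕ) := by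
    intro a ha b hb hab
    simp only [Prod.mk.injEq] at hab
    simp only [Finset.coe_range, Set.mem_Iio] at ha hb
    exact ((Nat.modEq_and_modEq_iff_modEq_mul hmk).1 hab).eq_of_lt_of_lt ha hb
  refine Finset.sum_nbij _ hmaps hinj (Finset.surjOn_of_injOn_of_card_le _ hmaps hinj (by simp)) ?_
  intro n _
  rw [hu.map_mod_nat, hv.map_mod_nat]

theorem periodic_prod_of_forall_periodic {ι : Type*} {s : Finset ι} {m : ι → ℕ} {F : ι → ℕ → R}
    (hF : ∀ i ∈ s, Function.Periodic (F i) (m i)) :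
    Function.Periodic (fun n => ∏ i ∈ s, F i n) (∏ i ∈ s, m i) := by
  intro n
  refine Finset.prod_congr rfl fun i hi => ?_
  obtain ⟨c, hc⟩ := Finset.dvd_prod_of_mem m hi
  rw [hc, mul_comm]
  exact (hF i hi).nsmul c n

theorem sum_range_prod_of_pairwise_coprime {s : Finset ℕ} (hpos : ∀ p ∈ s, 0 < p)
    (hs : (s : Set ℕ).Pairwise Nat.Coprime) {F : ℕ → ℕ → R}
    (hF : ∀ p ∈ s, Function.Periodic (F p) p) :
    ∑ n ∈ Finset.range (∏ p ∈ s, p), ∏ p ∈ s, F p n = ∏ p ∈ s, ∑ n ∈ Finset.range p, F p n := by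
  induction s using Finset.induction_on with
  | empty => simp
  | insert a s ha ih =>
    have hF' : ∀ p ∈ s, Function.Periodic (F p) p := fun p hp => hF p (Finset.mem_insert_of_mem hp)
    have hpos' : ∀ p ∈ s, 0 < p := fun p hp => hpos p (Finset.mem_insert_of_mem hp)
    have hcop : a.Coprime (∏ p ∈ s, p) := Nat.Coprime.prod_right fun p hp =>
      hs (Finset.mem_insert_self a s) (Finset.mem_insert_of_mem hp)
        (ne_of_mem_of_not_mem hp ha).symm
    simp only [Finset.prod_insert ha]
    rw [← ih hpos' (hs.mono (Finset.subset_insert a s)) hF']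
    exact sum_range_mul_of_coprime_of_periodic hcop (hpos a (Finset.mem_insert_self a s))
      (Finset.prod_pos hpos') (hF a (Finset.mem_insert_self a s))
      (periodic_prod_of_forall_periodic hF')

end PeriodicAverages

theorem sum_range_mul_of_periodic {R : Type*} [Semiring R] {F : ℕ → R} {M : ℕ}
    (hF : Function.Periodic F M) (k : ℕ) :
    ∑ n ∈ Finset.range (M * k), F n = k * ∑ n ∈ Finset.range M, F n := by
  induction k with
  | zero => simp
  | succ k ih =>
    have hshift (n : ℕ) : F (M * k + n) = F n := by
      rw [add_comm, mul_comm]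
      exact hF.nsmul k n
    rw [Nat.mul_succ, Finset.sum_range_add, ih, Nat.cast_succ, add_one_mul]
    simp only [hshift]

theorem sum_range_le_of_periodic {F : ℕ → ℝ} {M : ℕ} (hM : 0 < M) (hF : Function.Periodic F M)
    (hF1 : ∀ n, F n ≤ 1) (K : ℕ) :
    ∑ n ∈ Finset.range K, F n ≤ ((K / M : ℕ) : ℝ) * ∑ n ∈ Finset.range M, F n + M := by
  have hrest : ∑ n ∈ Finset.range (K % M), F (M * (K / M) + n) ≤ M := calc
    _ ≤ ∑ _n ∈ Finset.range (K % M), (1 : ℝ) := Finset.sum_le_sum fun n _ => hF1 _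
    _ = (K % M : ℕ) := by simp
    _ ≤ M := mod_cast (Nat.mod_lt K hM).le
  calc ∑ n ∈ Finset.range K, F n
      = ∑ n ∈ Finset.range (M * (K / M) + K % M), F n := by rw [Nat.div_add_mod]
    _ ≤ _ := by
      rw [Finset.sum_range_add, sum_range_mul_of_periodic hF]
      gcongr

/-! ### A sieve from nearly orthogonal weights -/

/-- A mean-zero weight modulo `p`: a `p`-periodic function, bounded by `1`, of mean `0` and mean
square `h`. Products of such weights over distinct coprime moduli are nearly orthogonal. -/
structure IsLocalWeight (p : ℕ) (f : ℕ → ℝ) (h : ℝ) : Prop where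
  pos : 0 < p
  periodic : Function.Periodic f p
  abs_le_one : ∀ n, |f n| ≤ 1
  sum_eq_zero : ∑ n ∈ Finset.range p, f n = 0
  sum_sq : ∑ n ∈ Finset.range p, f n ^ 2 = p * h

theorem IsLocalWeight.nonneg {p : ℕ} {f : ℕ → ℝ} {h : ℝ} (hf : IsLocalWeight p f h) : 0 ≤ h := by
  have hp : (0 : ℝ) < p := mod_cast hf.pos
  exact nonneg_of_mul_nonneg_right (hf.sum_sq ▸ Finset.sum_nonneg fun n _ => sq_nonneg _) hp

theorem sum_range_prod_le_of_periodic {s : Finset ℕ} (hpos : ∀ p ∈ s, 0 < p)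
    (hs : (s : Set ℕ).Pairwise Nat.Coprime) {F : ℕ → ℕ → ℝ}
    (hF : ∀ p ∈ s, Function.Periodic (F p) p) (hF1 : ∀ p ∈ s, ∀ n, |F p n| ≤ 1) (K : ℕ) :
    ∑ n ∈ Finset.range K, ∏ p ∈ s, F p n ≤
      ((K / ∏ p ∈ s, p : ℕ) : ℝ) * ∏ p ∈ s, ∑ n ∈ Finset.range p, F p n + ∏ p ∈ s, (p : ℝ) := by
  have hle (n : ℕ) : ∏ p ∈ s, F p n ≤ 1 := by
    refine (le_abs_self _).trans ?_
    rw [Finset.abs_prod]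
    exact Finset.prod_le_one (fun p _ => abs_nonneg _) fun p hp => hF1 p hp n
  rw [← sum_range_prod_of_pairwise_coprime hpos hs hF, ← Nat.cast_prod]
  exact sum_range_le_of_periodic (Finset.prod_pos hpos) (periodic_prod_of_forall_periodic hF) hle K

section Sieve

variable {P : Set ℕ} {g : ℕ → ℕ → ℝ} {h : ℕ → ℝ} {s t : Finset ℕ}

theorem sum_range_sq_prod_le (hcop : P.Pairwise Nat.Coprime)
    (hg : ∀ p ∈ P, IsLocalWeight p (g p) (h p)) (hs : ↑s ⊆ P) (K : ℕ) :
    ∑ n ∈ Finset.range K, (∏ p ∈ s, g p n) ^ 2 ≤ K * ∏ p ∈ s, h p + ∏ p ∈ s, (p : ℝ) := by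
  have hw : ∀ p ∈ s, IsLocalWeight p (g p) (h p) := fun p hp => hg p (hs hp)
  have hh : 0 ≤ ∏ p ∈ s, h p := Finset.prod_nonneg fun p hp => (hw p hp).nonneg
  simp only [← Finset.prod_pow]
  refine (sum_range_prod_le_of_periodic (fun p hp => (hw p hp).pos) (hcop.mono hs)
    (F := fun p n => g p n ^ 2) (fun p hp => (hw p hp).periodic.comp (· ^ 2)) ?_ K).trans ?_
  · intro p hp n
    rw [abs_pow]
    exact pow_le_one₀ (abs_nonneg _) ((hw p hp).abs_le_one n)
  · rw [Finset.prod_congr rfl fun p hp => (hw p hp).sum_sq, Finset.prod_mul_distrib, ← mul_assoc,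
      ← Nat.cast_prod]
    gcongr
    exact mod_cast Nat.div_mul_le_self K _

theorem sum_range_prod_mul_prod_le (hcop : P.Pairwise Nat.Coprime)
    (hg : ∀ p ∈ P, IsLocalWeight p (g p) (h p)) (hs : ↑s ⊆ P) (ht : ↑t ⊆ P) (hst : s ≠ t) (K : ℕ) :
    ∑ n ∈ Finset.range K, (∏ p ∈ s, g p n) * ∏ p ∈ t, g p n ≤
      (∏ p ∈ s, (p : ℝ)) * ∏ p ∈ t, (p : ℝ) := by
  classical
  let F : ℕ → ℕ → ℝ := fun p n => (if p ∈ s then g p n else 1) * (if p ∈ t then g p n else 1)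
  have hF (n : ℕ) : (∏ p ∈ s, g p n) * ∏ p ∈ t, g p n = ∏ p ∈ s ∪ t, F p n := by
    simp only [F, Finset.prod_mul_distrib, Finset.prod_ite_mem, Finset.union_inter_cancel_left,
      Finset.union_inter_cancel_right]
  have hst_sub : ↑(s ∪ t) ⊆ P := by
    rw [Finset.coe_union]
    exact Set.union_subset hs ht
  have hw : ∀ p ∈ s ∪ t, IsLocalWeight p (g p) (h p) := fun p hp => hg p (hst_sub hp)
  have hperiodic : ∀ p ∈ s ∪ t, Function.Periodic (F p) p := by
    intro p hp n
    simp only [F, (hw p hp).periodic n]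
  have habs : ∀ p ∈ s ∪ t, ∀ n, |F p n| ≤ 1 := by
    intro p hp n
    have hle := (hw p hp).abs_le_one n
    rw [abs_mul]
    refine mul_le_one₀ ?_ (abs_nonneg _) ?_ <;> split_ifs <;> simp [hle]
  -- A modulus in the symmetric difference contributes the factor `∑ n < p, g p n = 0`.
  have hzero : ∏ p ∈ s ∪ t, ∑ n ∈ Finset.range p, F p n = 0 := by
    obtain ⟨p, hp⟩ := Finset.symmDiff_nonempty.2 hst
    have hp_union : p ∈ s ∪ t := Finset.symmDiff_subset_union hp
    refine Finset.prod_eq_zero hp_union ?_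
    rw [← (hw p hp_union).sum_eq_zero]
    rcases Finset.mem_symmDiff.1 hp with ⟨hps, hpt⟩ | ⟨hpt, hps⟩ <;> simp [F, hps, hpt]
  have hunion : ∏ p ∈ s ∪ t, (p : ℝ) ≤ (∏ p ∈ s, (p : ℝ)) * ∏ p ∈ t, (p : ℝ) := by
    rw [← Finset.prod_union_inter]
    refine le_mul_of_one_le_right (Finset.prod_nonneg fun p _ => Nat.cast_nonneg p) ?_
    refine Finset.one_le_prod fun p hp => ?_
    exact mod_cast (hw p (Finset.inter_subset_union hp)).pos
  simp only [hF]
  refine (sum_range_prod_le_of_periodic (fun p hp => (hw p hp).pos) (hcop.mono hst_sub) hperiodic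
    habs K).trans ?_
  rwa [hzero, mul_zero, zero_add]

theorem sum_range_sq_sum_prod_le (hcop : P.Pairwise Nat.Coprime)
    (hg : ∀ p ∈ P, IsLocalWeight p (g p) (h p)) {D : Finset (Finset ℕ)}
    (hD : ∀ s ∈ D, ↑s ⊆ P) (K : ℕ) :
    ∑ n ∈ Finset.range K, (∑ s ∈ D, ∏ p ∈ s, g p n) ^ 2 ≤
      K * ∑ s ∈ D, ∏ p ∈ s, h p + (∑ s ∈ D, ∏ p ∈ s, (p : ℝ)) ^ 2 := by
  classical
  have hpair : ∀ s ∈ D, ∀ t ∈ D, ∑ n ∈ Finset.range K, (∏ p ∈ s, g p n) * ∏ p ∈ t, g p n ≤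
      (if s = t then K * ∏ p ∈ s, h p else 0) + (∏ p ∈ s, (p : ℝ)) * ∏ p ∈ t, (p : ℝ) := by
    intro s hs t ht
    split_ifs with hst
    · subst hst
      have hone : 1 ≤ ∏ p ∈ s, (p : ℝ) :=
        Finset.one_le_prod fun p hp => mod_cast (hg p (hD s hs hp)).pos
      simp only [← pow_two]
      refine (sum_range_sq_prod_le hcop hg (hD s hs) K).trans ?_
      gcongr
      exact le_self_pow₀ hone two_ne_zero
    · rw [zero_add]
      exact sum_range_prod_mul_prod_le hcop hg (hD s hs) (hD t ht) hst K
  calc ∑ n ∈ Finset.range K, (∑ s ∈ D, ∏ p ∈ s, g p n) ^ 2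
      = ∑ s ∈ D, ∑ t ∈ D, ∑ n ∈ Finset.range K, (∏ p ∈ s, g p n) * ∏ p ∈ t, g p n := by
        simp only [sq, Finset.sum_mul_sum]
        rw [Finset.sum_comm]
        exact Finset.sum_congr rfl fun s _ => Finset.sum_comm
    _ ≤ ∑ s ∈ D, ∑ t ∈ D,
        ((if s = t then K * ∏ p ∈ s, h p else 0) + (∏ p ∈ s, (p : ℝ)) * ∏ p ∈ t, (p : ℝ)) :=
        Finset.sum_le_sum fun s hs => Finset.sum_le_sum fun t ht => hpair s hs t ht
    _ = _ := by
        simp only [Finset.sum_add_distrib, ← Finset.sum_mul_sum, Finset.sum_ite_eq, sq,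
          Finset.mul_sum]
        rw [Finset.sum_ite_mem, Finset.inter_self]

theorem card_mul_sq_le_of_sieve (hcop : P.Pairwise Nat.Coprime)
    (hg : ∀ p ∈ P, IsLocalWeight p (g p) (h p)) {D : Finset (Finset ℕ)}
    (hD : ∀ s ∈ D, ↑s ⊆ P) {K : ℕ} {S : Finset ℕ} (hSK : S ⊆ Finset.range K)
    (hS : ∀ n ∈ S, ∀ s ∈ D, ∀ p ∈ s, g p n = h p) :
    (S.card : ℝ) * (∑ s ∈ D, ∏ p ∈ s, h p) ^ 2 ≤
      K * ∑ s ∈ D, ∏ p ∈ s, h p + (∑ s ∈ D, ∏ p ∈ s, (p : ℝ)) ^ 2 := by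
  calc (S.card : ℝ) * (∑ s ∈ D, ∏ p ∈ s, h p) ^ 2
      = ∑ n ∈ S, (∑ s ∈ D, ∏ p ∈ s, g p n) ^ 2 := by
        rw [← nsmul_eq_mul, ← Finset.sum_const]
        refine Finset.sum_congr rfl fun n hn => ?_
        rw [Finset.sum_congr rfl fun s hs => Finset.prod_congr rfl fun p hp => hS n hn s hs p hp]
    _ ≤ ∑ n ∈ Finset.range K, (∑ s ∈ D, ∏ p ∈ s, g p n) ^ 2 :=
        Finset.sum_le_sum_of_subset_of_nonneg hSK fun _ _ _ => sq_nonneg _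
    _ ≤ _ := sum_range_sq_sum_prod_le hcop hg hD K

end Sieve

/-- The mean-zero weight modulo `p` that detects whether `n` avoids the residue classes of `H`: it
is `-1` on these classes and constant elsewhere. -/
noncomputable def tupleWeight (H : Finset ℕ) (p n : ℕ) : ℝ :=
  if n % p ∈ H.image (· % p) then -1 else H.card / (p - H.card)

theorem filter_range_mod_mem_image_mod {p : ℕ} (hp : 0 < p) (H : Finset ℕ) :
    {n ∈ Finset.range p | n % p ∈ H.image (· % p)} = H.image (· % p) := by
  ext n
  simp only [Finset.mem_filter, Finset.mem_range]
  constructor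
  · rintro ⟨hn, hmem⟩
    rwa [Nat.mod_eq_of_lt hn] at hmem
  · intro hmem
    obtain ⟨m, -, rfl⟩ := Finset.mem_image.1 hmem
    have hlt : m % p < p := Nat.mod_lt m hp
    exact ⟨hlt, by rwa [Nat.mod_eq_of_lt hlt]⟩

theorem isLocalWeight_tupleWeight {H : Finset ℕ} {p : ℕ} (hp : 0 < p) (hHp : 2 * H.card ≤ p)
    (hH : Set.InjOn (· % p) (H : Set ℕ)) :
    IsLocalWeight p (tupleWeight H p) (H.card / (p - H.card)) := by
  have hp' : (0 : ℝ) < p := mod_cast hp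
  have hHp' : 2 * (H.card : ℝ) ≤ p := mod_cast hHp
  have hsub : (0 : ℝ) < p - H.card := by linarith
  have hcard : ({n ∈ Finset.range p | n % p ∈ H.image (· % p)}.card : ℝ) = H.card := by
    rw [filter_range_mod_mem_image_mod hp, Finset.card_image_of_injOn hH]
  have hcard_not : ({n ∈ Finset.range p | n % p ∉ H.image (· % p)}.card : ℝ) = p - H.card := by
    have htotal := Finset.card_filter_add_card_filter_not (s := Finset.range p)
      (fun n => n % p ∈ H.image (· % p))
    rw [Finset.card_range] at htotal
    rw [← hcard, eq_sub_iff_add_eq, add_comm]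
    exact mod_cast htotal
  refine ⟨hp, fun n => by simp only [tupleWeight, Nat.add_mod_right], fun n => ?_, ?_, ?_⟩
  · unfold tupleWeight
    split_ifs
    · simp
    · rw [abs_of_nonneg (by positivity), div_le_one hsub]
      linarith
  · simp only [tupleWeight, Finset.sum_ite, Finset.sum_const, nsmul_eq_mul, hcard, hcard_not]
    field_simp
    ring
  · simp only [tupleWeight, ite_pow, Finset.sum_ite, Finset.sum_const, nsmul_eq_mul, hcard,
      hcard_not]
    field_simp
    ring

theorem tupleWeight_of_forall_prime_sub {H : Finset ℕ} {p n : ℕ} (hp : p.Prime)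
    (hn : ∀ h ∈ H, (n - h).Prime ∧ p < n - h) : tupleWeight H p n = H.card / (p - H.card) := by
  refine if_neg fun hmem => ?_
  obtain ⟨h, hh, hmod⟩ := Finset.mem_image.1 hmem
  obtain ⟨hprime, hlt⟩ := hn h hh
  have hdvd : p ∣ n - h := (Nat.modEq_iff_dvd' (by lia)).1 hmod
  exact hlt.ne ((Nat.prime_dvd_prime_iff_eq hp hprime).1 hdvd)

/-! ### Lower bound for the sieve sum -/

/-- The integers in `[1, Y]` coprime to `B`. -/
def coprimeUpTo (B Y : ℕ) : Finset ℕ :=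
  (Finset.Icc 1 Y).filter (Nat.Coprime B)

theorem mem_coprimeUpTo {B Y n : ℕ} : n ∈ coprimeUpTo B Y ↔ (1 ≤ n ∧ n ≤ Y) ∧ B.Coprime n := by
  simp only [coprimeUpTo, Finset.mem_filter, Finset.mem_Icc]

theorem mul_mem_coprimeUpTo {B Y Z m n : ℕ} (hm : m ∈ coprimeUpTo B Y)
    (hn : n ∈ coprimeUpTo B Z) : m * n ∈ coprimeUpTo B (Y * Z) := by
  rw [mem_coprimeUpTo] at *
  exact ⟨⟨Nat.mul_pos hm.1.1 hn.1.1, Nat.mul_le_mul hm.1.2 hn.1.2⟩, hm.2.mul_right hn.2⟩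

theorem log_div_le_sum_coprimeUpTo {B : ℕ} (hB : 0 < B) (W : ℕ) :
    Real.log (W + 1) / B ≤ ∑ b ∈ coprimeUpTo B (B * W), (1 : ℝ) / b := by
  have hB1 : (1 : ℝ) ≤ B := mod_cast hB
  have hinj : Set.InjOn (fun j : ℕ => j * B + 1) (Finset.range W : Set ℕ) := by
    intro a _ b _ hab
    exact Nat.eq_of_mul_eq_mul_right hB (Nat.add_right_cancel hab)
  have hsub : (Finset.range W).image (fun j : ℕ => j * B + 1) ⊆ coprimeUpTo B (B * W) := by
    refine Finset.image_subset_iff.2 fun j hj => mem_coprimeUpTo.2 ⟨⟨by lia, ?_⟩, by simp⟩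
    have hmul : (j + 1) * B ≤ W * B := Nat.mul_le_mul_right B (Finset.mem_range.1 hj)
    lia
  calc Real.log (W + 1) / B ≤ (harmonic W : ℝ) / B := by
        gcongr
        exact mod_cast log_add_one_le_harmonic W
    _ = ∑ j ∈ Finset.range W, (1 : ℝ) / ((j + 1) * B) := by
        rw [harmonic, Rat.cast_sum, Finset.sum_div]
        refine Finset.sum_congr rfl fun j _ => ?_
        push_cast
        field_simp
    _ ≤ ∑ j ∈ Finset.range W, (1 : ℝ) / ((j * B + 1 : ℕ) : ℝ) := by
        gcongr with j
        push_cast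
        linarith
    _ = ∑ b ∈ (Finset.range W).image (fun j : ℕ => j * B + 1), (1 : ℝ) / b := by
        rw [Finset.sum_image hinj]
    _ ≤ _ := Finset.sum_le_sum_of_subset_of_nonneg hsub fun _ _ _ => by positivity

section CardFactors

open ArithmeticFunction

theorem sum_divisors_pow_cardFactors_le (k : ℕ) {n : ℕ} (hn : n ≠ 0) :
    ∑ a ∈ n.divisors, k ^ cardFactors a ≤ (k + 1) ^ cardFactors n := by
  induction n using Nat.recOnMul with
  | zero => exact absurd rfl hn
  | one => simp
  | prime p hp =>
    rw [hp.divisors, Finset.sum_pair hp.one_lt.ne, cardFactors_apply_prime hp]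
    simp [add_comm]
  | mul a b iha ihb =>
    have ha : a ≠ 0 := left_ne_zero_of_mul hn
    have hb : b ≠ 0 := right_ne_zero_of_mul hn
    calc ∑ c ∈ (a * b).divisors, k ^ cardFactors c
        = ∑ c ∈ (a.divisors ×ˢ b.divisors).image (fun x => x.1 * x.2), k ^ cardFactors c := by
          rw [Nat.divisors_mul, ← Finset.image_mul_product]
      _ ≤ ∑ x ∈ a.divisors ×ˢ b.divisors, k ^ cardFactors (x.1 * x.2) :=
          Finset.sum_image_le_of_nonneg fun _ _ => by positivity
      _ = (∑ c ∈ a.divisors, k ^ cardFactors c) * ∑ c ∈ b.divisors, k ^ cardFactors c := by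
          rw [Finset.sum_mul_sum, ← Finset.sum_product']
          refine Finset.sum_congr rfl fun x hx => ?_
          obtain ⟨hxa, hxb⟩ := Finset.mem_product.1 hx
          rw [cardFactors_mul (Nat.pos_of_mem_divisors hxa).ne' (Nat.pos_of_mem_divisors hxb).ne',
            pow_add]
      _ ≤ (k + 1) ^ cardFactors (a * b) := by
          rw [cardFactors_mul ha hb, pow_add]
          exact Nat.mul_le_mul (iha ha) (ihb hb)

theorem sum_coprimeUpTo_mul_sum_le (B k Y Z : ℕ) :
    (∑ a ∈ coprimeUpTo B Y, (k : ℝ) ^ cardFactors a / a) * ∑ b ∈ coprimeUpTo B Z, (1 : ℝ) / b ≤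
      ∑ n ∈ coprimeUpTo B (Y * Z), ((k + 1 : ℕ) : ℝ) ^ cardFactors n / n := by
  rw [Finset.sum_mul_sum, ← Finset.sum_product', ← Finset.sum_fiberwise_of_maps_to
    (t := coprimeUpTo B (Y * Z)) (g := fun x => x.1 * x.2) fun x hx =>
    mul_mem_coprimeUpTo (Finset.mem_product.1 hx).1 (Finset.mem_product.1 hx).2]
  refine Finset.sum_le_sum fun n hn => ?_
  have hn0 : n ≠ 0 := by
    have := mem_coprimeUpTo.1 hn
    lia
  have hsub : {x ∈ coprimeUpTo B Y ×ˢ coprimeUpTo B Z | x.1 * x.2 = n} ⊆ n.divisorsAntidiagonal :=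
    fun x hx => Nat.mem_divisorsAntidiagonal.2 ⟨(Finset.mem_filter.1 hx).2, hn0⟩
  have hdiv : (∑ a ∈ n.divisors, (k : ℝ) ^ cardFactors a) ≤ ((k + 1 : ℕ) : ℝ) ^ cardFactors n :=
    mod_cast sum_divisors_pow_cardFactors_le k hn0
  calc ∑ x ∈ coprimeUpTo B Y ×ˢ coprimeUpTo B Z with x.1 * x.2 = n,
        (k : ℝ) ^ cardFactors x.1 / (x.1 : ℝ) * (1 / (x.2 : ℝ))
      = ∑ x ∈ coprimeUpTo B Y ×ˢ coprimeUpTo B Z with x.1 * x.2 = n,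
          (k : ℝ) ^ cardFactors x.1 / n := by
        refine Finset.sum_congr rfl fun x hx => ?_
        rw [div_mul_div_comm, mul_one, ← (Finset.mem_filter.1 hx).2, Nat.cast_mul]
    _ ≤ ∑ x ∈ n.divisorsAntidiagonal, (k : ℝ) ^ cardFactors x.1 / n :=
        Finset.sum_le_sum_of_subset_of_nonneg hsub fun _ _ _ => by positivity
    _ = (∑ a ∈ n.divisors, (k : ℝ) ^ cardFactors a) / n := by
        rw [Nat.sum_divisorsAntidiagonal (fun a _ => (k : ℝ) ^ cardFactors a / n), Finset.sum_div]
    _ ≤ _ := by gcongr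

theorem sum_coprimeUpTo_pow_le (B Y k : ℕ) :
    (∑ b ∈ coprimeUpTo B Y, (1 : ℝ) / b) ^ k ≤
      ∑ n ∈ coprimeUpTo B (Y ^ k), (k : ℝ) ^ cardFactors n / n := by
  induction k with
  | zero =>
    have hone : 1 ∈ coprimeUpTo B (Y ^ 0) := mem_coprimeUpTo.2 (by simp)
    refine le_of_eq_of_le ?_ (Finset.single_le_sum (fun _ _ => by positivity) hone)
    simp
  | succ k ih =>
    rw [pow_succ, pow_succ]
    exact (mul_le_mul_of_nonneg_right ih (Finset.sum_nonneg fun _ _ => by positivity)).trans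
      (sum_coprimeUpTo_mul_sum_le B k _ Y)

end CardFactors

section EulerProduct

open ArithmeticFunction

/-- The completely multiplicative function `n ↦ k ^ Ω(n) / n` restricted to the integers all of
whose prime factors lie in `s`, so that its value at every prime is less than `1` as soon as the
primes of `s` exceed `k`. -/
noncomputable def factoredWeight (k : ℕ) (s : Finset ℕ) : ℕ →* ℝ where
  toFun n := if n.primeFactors ⊆ s then (k : ℝ) ^ cardFactors n / n else 0
  map_one' := by simp
  map_mul' m n := by
    rcases eq_or_ne m 0 with rfl | hm
    · simp
    rcases eq_or_ne n 0 with rfl | hn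
    · simp
    simp only [cardFactors_mul hm hn, Nat.primeFactors_mul hm hn, Finset.union_subset_iff,
      ite_and, ite_mul, mul_ite, zero_mul, mul_zero, pow_add, Nat.cast_mul, mul_div_mul_comm]
    split_ifs <;> rfl

theorem factoredWeight_of_subset {k n : ℕ} {s : Finset ℕ} (hn : n.primeFactors ⊆ s) :
    factoredWeight k s n = (k : ℝ) ^ cardFactors n / n :=
  if_pos hn

theorem factoredWeight_nonneg (k : ℕ) (s : Finset ℕ) (n : ℕ) : 0 ≤ factoredWeight k s n := by
  change 0 ≤ ite _ _ _
  split_ifs <;> positivity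

variable {k : ℕ} {s : Finset ℕ}

theorem factoredWeight_prime {p : ℕ} (hp : p.Prime) (hps : p ∈ s) :
    factoredWeight k s p = k / p := by
  rw [factoredWeight_of_subset (by simpa [hp.primeFactors] using hps), cardFactors_apply_prime hp,
    pow_one]

theorem sum_factoredWeight_le (hs : ∀ p ∈ s, p.Prime ∧ k < p) {T : Finset ℕ}
    (hT : ↑T ⊆ Nat.factoredNumbers s) :
    ∑ n ∈ T, factoredWeight k s n ≤ ∏ p ∈ s, (1 - (k : ℝ) / p)⁻¹ := by
  have hlt {p : ℕ} (hp : p.Prime) : ‖factoredWeight k s p‖ < 1 := by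
    rw [Real.norm_of_nonneg (factoredWeight_nonneg k s p)]
    by_cases hps : p ∈ s
    · rw [factoredWeight_prime hp hps, div_lt_one (mod_cast hp.pos)]
      exact mod_cast (hs p hps).2
    · have hnot : ¬ p.primeFactors ⊆ s := by simpa [hp.primeFactors] using hps
      exact (if_neg hnot).trans_lt one_pos
  have hsum := (hasSum_subtype_iff_indicator.1
    (EulerProduct.summable_and_hasSum_factoredNumbers_prod_filter_prime_geometric hlt s).2)
  calc ∑ n ∈ T, factoredWeight k s n
      = ∑ n ∈ T, (Nat.factoredNumbers s).indicator (factoredWeight k s) n :=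
        Finset.sum_congr rfl fun n hn => (Set.indicator_of_mem (hT hn) _).symm
    _ ≤ ∏ p ∈ s with p.Prime, (1 - factoredWeight k s p)⁻¹ := sum_le_hasSum T
        (fun n _ => Set.indicator_nonneg (fun n _ => factoredWeight_nonneg k s n) n) hsum
    _ = ∏ p ∈ s, (1 - (k : ℝ) / p)⁻¹ := by
        rw [Finset.filter_true_of_mem fun p hp => (hs p hp).1]
        exact Finset.prod_congr rfl fun p hp => by rw [factoredWeight_prime (hs p hp).1 hp]

theorem sum_pow_cardFactors_div_le_prod (hs : ∀ p ∈ s, p.Prime ∧ k < p) {T : Finset ℕ}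
    (hT : ∀ n ∈ T, n ≠ 0 ∧ n.primeFactors = s) :
    ∑ n ∈ T, (k : ℝ) ^ cardFactors n / n ≤ ∏ p ∈ s, (k : ℝ) / (p - k) := by
  set P := ∏ p ∈ s, p with hP
  have hdvd : ∀ n ∈ T, P ∣ n := fun n hn => by
    rw [hP, ← (hT n hn).2]
    exact Nat.prod_primeFactors_dvd n
  have hinj : Set.InjOn (· / P) (T : Set ℕ) := fun a ha b hb hab =>
    (Nat.div_left_inj (hdvd a ha) (hdvd b hb)).1 hab
  have hmem : ↑(T.image (· / P)) ⊆ Nat.factoredNumbers s := by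
    intro m hm
    obtain ⟨n, hn, rfl⟩ := Finset.mem_image.1 hm
    have hdiv := Nat.div_dvd_of_dvd (hdvd n hn)
    refine Nat.mem_factoredNumbers_of_primeFactors_subset
      (ne_zero_of_dvd_ne_zero (hT n hn).1 hdiv) ?_
    exact (hT n hn).2 ▸ Nat.primeFactors_mono hdiv (hT n hn).1
  calc ∑ n ∈ T, (k : ℝ) ^ cardFactors n / n
      = ∑ n ∈ T, factoredWeight k s P * factoredWeight k s (n / P) :=
        Finset.sum_congr rfl fun n hn => by
          rw [← map_mul, Nat.mul_div_cancel' (hdvd n hn),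
            factoredWeight_of_subset (hT n hn).2.subset]
    _ = factoredWeight k s P * ∑ m ∈ T.image (· / P), factoredWeight k s m := by
        rw [← Finset.mul_sum, Finset.sum_image hinj]
    _ ≤ (∏ p ∈ s, (k : ℝ) / p) * ∏ p ∈ s, (1 - (k : ℝ) / p)⁻¹ := by
        rw [hP, map_prod, Finset.prod_congr rfl fun p hp => factoredWeight_prime (hs p hp).1 hp]
        gcongr
        exact sum_factoredWeight_le hs hmem
    _ = ∏ p ∈ s, (k : ℝ) / (p - k) := by
        rw [← Finset.prod_mul_distrib]
        refine Finset.prod_congr rfl fun p hp => ?_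
        have hp0 : (p : ℝ) ≠ 0 := mod_cast (hs p hp).1.ne_zero
        rw [one_sub_div hp0, inv_div, div_mul_div_cancel₀ hp0]

end EulerProduct

/-- The sets of prime factors of the integers in `[1, Q]` coprime to `B`. They encode the
squarefree sifting moduli, each `s` standing for `∏ p ∈ s, p`. -/
def siftingSets (B Q : ℕ) : Finset (Finset ℕ) :=
  (coprimeUpTo B Q).image Nat.primeFactors

section SiftingSets

variable {B Q k : ℕ} {s : Finset ℕ}

theorem prime_and_coprime_of_mem_siftingSets (hs : s ∈ siftingSets B Q) {p : ℕ} (hp : p ∈ s) :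
    p.Prime ∧ B.Coprime p := by
  obtain ⟨n, hn, rfl⟩ := Finset.mem_image.1 hs
  exact ⟨Nat.prime_of_mem_primeFactors hp,
    (mem_coprimeUpTo.1 hn).2.coprime_dvd_right (Nat.dvd_of_mem_primeFactors hp)⟩

theorem prod_le_of_mem_siftingSets (hs : s ∈ siftingSets B Q) : ∏ p ∈ s, p ≤ Q := by
  obtain ⟨n, hn, rfl⟩ := Finset.mem_image.1 hs
  have hn := mem_coprimeUpTo.1 hn
  exact (Nat.le_of_dvd hn.1.1 (Nat.prod_primeFactors_dvd n)).trans hn.1.2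

theorem le_of_mem_of_mem_siftingSets (hs : s ∈ siftingSets B Q) {p : ℕ} (hp : p ∈ s) : p ≤ Q :=
  (Finset.single_le_prod' (f := id) (fun _ hq =>
    (prime_and_coprime_of_mem_siftingSets hs hq).1.one_le) hp).trans (prod_le_of_mem_siftingSets hs)

theorem sum_prod_siftingSets_le (B Q : ℕ) :
    ∑ s ∈ siftingSets B Q, ∏ p ∈ s, (p : ℝ) ≤ (Q : ℝ) ^ 2 := by
  have hcard : (siftingSets B Q).card ≤ Q := by
    refine Finset.card_image_le.trans ((Finset.card_filter_le _ _).trans ?_)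
    rw [Nat.card_Icc, Nat.add_sub_cancel]
  calc ∑ s ∈ siftingSets B Q, ∏ p ∈ s, (p : ℝ) ≤ (siftingSets B Q).card • (Q : ℝ) :=
        Finset.sum_le_card_nsmul _ _ _ fun s hs => by
          rw [← Nat.cast_prod]
          exact mod_cast prod_le_of_mem_siftingSets hs
    _ ≤ (Q : ℝ) ^ 2 := by
        rw [nsmul_eq_mul, sq]
        gcongr

theorem sum_pow_cardFactors_div_le_sum_siftingSets (hB : ∀ p, p.Prime → B.Coprime p → k < p) :
    ∑ n ∈ coprimeUpTo B Q, (k : ℝ) ^ ArithmeticFunction.cardFactors n / n ≤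
      ∑ s ∈ siftingSets B Q, ∏ p ∈ s, (k : ℝ) / (p - k) := by
  rw [← Finset.sum_fiberwise_of_maps_to fun n hn => Finset.mem_image_of_mem Nat.primeFactors hn]
  refine Finset.sum_le_sum fun s hs =>
    sum_pow_cardFactors_div_le_prod (fun p hp => ?_) fun n hn => ?_
  · obtain ⟨hprime, hcop⟩ := prime_and_coprime_of_mem_siftingSets hs hp
    exact ⟨hprime, hB p hprime hcop⟩
  · obtain ⟨hn, hns⟩ := Finset.mem_filter.1 hn
    exact ⟨Nat.one_le_iff_ne_zero.1 (mem_coprimeUpTo.1 hn).1.1, hns⟩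

theorem log_div_pow_le_sum_siftingSets (hB0 : 0 < B) (hB : ∀ p, p.Prime → B.Coprime p → k < p)
    (W : ℕ) :
    (Real.log (W + 1) / B) ^ k ≤
      ∑ s ∈ siftingSets B ((B * W) ^ k), ∏ p ∈ s, (k : ℝ) / (p - k) := by
  have hlog : 0 ≤ Real.log (W + 1) := Real.log_nonneg (by linarith [W.cast_nonneg (α := ℝ)])
  calc (Real.log (W + 1) / B) ^ k ≤ (∑ b ∈ coprimeUpTo B (B * W), (1 : ℝ) / b) ^ k := by
        gcongr
        exact log_div_le_sum_coprimeUpTo hB0 W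
    _ ≤ _ := sum_coprimeUpTo_pow_le B (B * W) k
    _ ≤ _ := sum_pow_cardFactors_div_le_sum_siftingSets hB

end SiftingSets

/-! ### Prime triples -/

theorem le_div_add_div_sq_of_mul_sq_le {S L K E l : ℝ} (hl : 0 < l) (hlL : l ≤ L) (hK : 0 ≤ K)
    (hE : 0 ≤ E) (h : S * L ^ 2 ≤ K * L + E) : S ≤ K / l + E / l ^ 2 := by
  have hL : 0 < L := hl.trans_le hlL
  calc S ≤ (K * L + E) / L ^ 2 := (le_div_iff₀ (by positivity)).2 h
    _ = K / L + E / L ^ 2 := by field_simp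
    _ ≤ K / l + E / l ^ 2 := by gcongr

section PrimeTuples

variable {H : Finset ℕ} {B W : ℕ}

theorem card_filter_prime_sub_and_lt_le (hB0 : 0 < B)
    (hB : ∀ p, p.Prime → B.Coprime p → 2 * H.card ≤ p ∧ Set.InjOn (· % p) (H : Set ℕ))
    (hW : 0 < W) (K : ℕ) :
    ({n ∈ Finset.range K | ∀ h ∈ H, (n - h).Prime ∧ (B * W) ^ H.card < n - h}.card : ℝ) ≤
      K / (Real.log (W + 1) / B) ^ H.card +
        ((B : ℝ) * W) ^ (4 * H.card) / (Real.log (W + 1) / B) ^ (2 * H.card) := by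
  set k := H.card
  set Q := (B * W) ^ k with hQ
  have hlog : 0 < Real.log (W + 1) := Real.log_pos (by simpa using hW)
  have hkB : ∀ p, p.Prime → B.Coprime p → k < p := fun p hp hcop => by
    have := (hB p hp hcop).1
    have := hp.pos
    lia
  have hsieve := card_mul_sq_le_of_sieve (P := {p | p.Prime ∧ B.Coprime p})
    (fun p hp q hq hpq => (Nat.coprime_primes hp.1 hq.1).2 hpq)
    (fun p hp => isLocalWeight_tupleWeight hp.1.pos (hB p hp.1 hp.2).1 (hB p hp.1 hp.2).2)
    (D := siftingSets B Q) (fun s hs p hp => prime_and_coprime_of_mem_siftingSets hs hp)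
    (Finset.filter_subset (fun n => ∀ h ∈ H, (n - h).Prime ∧ Q < n - h) (Finset.range K))
    fun n hn s hs p hp => tupleWeight_of_forall_prime_sub
      (prime_and_coprime_of_mem_siftingSets hs hp).1 fun h hh => by
        obtain ⟨hprime, hlt⟩ := (Finset.mem_filter.1 hn).2 h hh
        exact ⟨hprime, (le_of_mem_of_mem_siftingSets hs hp).trans_lt hlt⟩
  have herror : (∑ s ∈ siftingSets B Q, ∏ p ∈ s, (p : ℝ)) ^ 2 ≤ ((B : ℝ) * W) ^ (4 * k) := calc
    _ ≤ ((Q : ℝ) ^ 2) ^ 2 := by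
      gcongr
      exact sum_prod_siftingSets_le B Q
    _ = _ := by
      rw [hQ]
      push_cast
      ring
  refine (le_div_add_div_sq_of_mul_sq_le (by positivity) (log_div_pow_le_sum_siftingSets hB0 hkB W)
    (Nat.cast_nonneg K) (by positivity) (hsieve.trans (add_le_add_right herror _))).trans_eq ?_
  rw [← pow_mul, mul_comm k 2]

theorem card_filter_forall_prime_sub_le (hB0 : 0 < B)
    (hB : ∀ p, p.Prime → B.Coprime p → 2 * H.card ≤ p ∧ Set.InjOn (· % p) (H : Set ℕ))
    (hW : 0 < W) {b : ℕ} (hb : ∀ h ∈ H, h ≤ b) (K : ℕ) :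
    ({n ∈ Finset.range K | ∀ h ∈ H, (n - h).Prime}.card : ℝ) ≤
      ((B : ℝ) * W) ^ H.card + b + 1 + (K / (Real.log (W + 1) / B) ^ H.card +
        ((B : ℝ) * W) ^ (4 * H.card) / (Real.log (W + 1) / B) ^ (2 * H.card)) := by
  set Q := (B * W) ^ H.card with hQ
  have hsub : {n ∈ Finset.range K | ∀ h ∈ H, (n - h).Prime} ⊆ Finset.range (Q + b + 1) ∪
      {n ∈ Finset.range K | ∀ h ∈ H, (n - h).Prime ∧ Q < n - h} := by
    intro n hn
    rw [Finset.mem_filter] at hn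
    rw [Finset.mem_union, Finset.mem_range, Finset.mem_filter]
    refine or_iff_not_imp_left.2 fun hlarge => ⟨hn.1, fun h hh => ⟨hn.2 h hh, ?_⟩⟩
    have := hb h hh
    lia
  have hcard := (Finset.card_le_card hsub).trans (Finset.card_union_le _ _)
  rw [Finset.card_range] at hcard
  calc ({n ∈ Finset.range K | ∀ h ∈ H, (n - h).Prime}.card : ℝ)
      ≤ (Q + b + 1 : ℕ) + ({n ∈ Finset.range K | ∀ h ∈ H, (n - h).Prime ∧ Q < n - h}.card : ℝ) :=
        mod_cast hcard
    _ ≤ _ := by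
        rw [hQ]
        push_cast
        gcongr
        exact card_filter_prime_sub_and_lt_le hB0 hB hW K

end PrimeTuples

theorem injOn_mod_of_not_dvd {a b p : ℕ} (hab : a < b) (hp : ¬ p ∣ a * b * (b - a)) :
    Set.InjOn (· % p) (({0, a, b} : Finset ℕ) : Set ℕ) := by
  have h0a : ¬ 0 ≡ a [MOD p] := fun h => hp <|
    (((Nat.modEq_iff_dvd' (Nat.zero_le a)).1 h).mul_right b).mul_right (b - a)
  have h0b : ¬ 0 ≡ b [MOD p] := fun h => hp <|
    (((Nat.modEq_iff_dvd' (Nat.zero_le b)).1 h).mul_left a).mul_right (b - a)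
  have habp : ¬ a ≡ b [MOD p] := fun h => hp <| ((Nat.modEq_iff_dvd' hab.le).1 h).mul_left (a * b)
  intro m hm n hn hmn
  simp only [Finset.coe_insert, Finset.coe_singleton, Set.mem_insert_iff,
    Set.mem_singleton_iff] at hm hn
  rcases hm with rfl | rfl | rfl <;> rcases hn with rfl | rfl | rfl <;>
    first
    | rfl
    | exact absurd hmn ‹_›
    | exact absurd hmn.symm ‹_›

theorem pi3_le {x : ℝ} (hx : 0 ≤ x) {a b B W : ℕ} (ha : 0 < a) (hab : a < b)
    (hB : B = Nat.factorial 5 * (a * b * (b - a))) (hW : 0 < W) :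
    (pi3 x a b : ℝ) ≤ ((B : ℝ) * W) ^ 3 + b + 1 + ((x + 1) / (Real.log (W + 1) / B) ^ 3 +
      ((B : ℝ) * W) ^ 12 / (Real.log (W + 1) / B) ^ 6) := by
  have hB0 : 0 < B := by
    have : 0 < b - a := Nat.sub_pos_of_lt hab
    have : 0 < b := ha.trans hab
    rw [hB]
    positivity
  have hcard : ({0, a, b} : Finset ℕ).card = 3 :=
    Finset.card_eq_three.2 ⟨0, a, b, ha.ne, (ha.trans hab).ne, hab.ne, rfl⟩
  have hadmissible : ∀ p, p.Prime → B.Coprime p →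
      2 * ({0, a, b} : Finset ℕ).card ≤ p ∧ Set.InjOn (· % p) (({0, a, b} : Finset ℕ) : Set ℕ) := by
    intro p hp hcop
    have hnot : ¬ p ∣ B := (Nat.Prime.coprime_iff_not_dvd hp).1 hcop.symm
    rw [hB, hp.dvd_mul, not_or, hp.dvd_factorial, not_le] at hnot
    exact ⟨hcard ▸ hnot.1, injOn_mod_of_not_dvd hab hnot.2⟩
  have hset : {q : ℕ | q.Prime ∧ (q : ℝ) ≤ x ∧ (q - a).Prime ∧ (q - b).Prime} =
      {n ∈ Finset.range (⌊x⌋₊ + 1) | ∀ h ∈ ({0, a, b} : Finset ℕ), (n - h).Prime} := by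
    ext q
    simp [Nat.le_floor_iff hx, and_left_comm]
  have hbound := card_filter_forall_prime_sub_le hB0 hadmissible hW (b := b)
    (by simp [hab.le]) (⌊x⌋₊ + 1)
  rw [hcard] at hbound
  rw [pi3, hset, Set.ncard_coe_finset]
  refine hbound.trans ?_
  have hlog : 0 < Real.log (W + 1) := Real.log_pos (by simpa using hW)
  gcongr
  push_cast
  linarith [Nat.floor_le hx]

theorem factorial_five_mul_le {a D : ℕ} (haD : a ≤ D) :
    Nat.factorial 5 * (a * D * (D - a)) ≤ 120 * D ^ 3 := calc
  _ ≤ Nat.factorial 5 * (D * D * D) := by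
    gcongr
    exact Nat.sub_le D a
  _ = 120 * D ^ 3 := by rw [pow_three', show Nat.factorial 5 = 120 from rfl]

theorem pi3_le_of_exp_one_le {x w : ℝ} (hx : 1 ≤ x) (hw : exp 1 ≤ w) {a D : ℕ} (ha : 0 < a)
    (haD : a < D) :
    (pi3 x a D : ℝ) ≤
      3 * ((120 * (D : ℝ) ^ 3) ^ 18 * w ^ 12) + 2 * x / (Real.log w / (120 * (D : ℝ) ^ 3)) ^ 3 := by
  have hw0 : 0 < w := (exp_pos 1).trans_le hw
  have hw1 : 1 ≤ w := (one_le_exp zero_le_one).trans hw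
  have hlogw : 1 ≤ Real.log w := (le_log_iff_exp_le hw0).2 hw
  have hW : (⌊w⌋₊ : ℝ) ≤ w := Nat.floor_le hw0.le
  have hlogW : Real.log w ≤ Real.log (⌊w⌋₊ + 1) := log_le_log hw0 (Nat.lt_floor_add_one w).le
  have hlogW1 : 1 ≤ Real.log (⌊w⌋₊ + 1) := hlogw.trans hlogW
  have hD1 : (1 : ℝ) ≤ D := mod_cast ha.trans haD
  set B := Nat.factorial 5 * (a * D * (D - a)) with hB
  set β : ℝ := 120 * (D : ℝ) ^ 3
  have hDβ : (D : ℝ) + 1 ≤ β := by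
    have : (D : ℝ) ≤ (D : ℝ) ^ 3 := le_self_pow₀ hD1 (by norm_num)
    linarith
  have hβ1 : 1 ≤ β := by linarith
  have hB0 : (0 : ℝ) < B := by
    have : 0 < D - a := Nat.sub_pos_of_lt haD
    have : 0 < D := ha.trans haD
    exact mod_cast (by positivity : 0 < B)
  have hBβ : (B : ℝ) ≤ β := calc
    (B : ℝ) ≤ ((120 * D ^ 3 : ℕ) : ℝ) := mod_cast factorial_five_mul_le haD.le
    _ = β := by push_cast; rfl
  have hdiag : (x + 1) / (Real.log (⌊w⌋₊ + 1) / B) ^ 3 ≤ 2 * x / (Real.log w / β) ^ 3 := by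
    gcongr
    linarith
  have hoffdiag : ((B : ℝ) * ⌊w⌋₊) ^ 12 / (Real.log (⌊w⌋₊ + 1) / B) ^ 6 ≤ β ^ 18 * w ^ 12 := calc
    _ ≤ (β * w) ^ 12 / (1 / β) ^ 6 := by gcongr
    _ = β ^ 18 * w ^ 12 := by field_simp
  have hlevel : ((B : ℝ) * ⌊w⌋₊) ^ 3 ≤ β ^ 18 * w ^ 12 := calc
    _ ≤ (β * w) ^ 3 := by gcongr
    _ = β ^ 3 * w ^ 3 := mul_pow β w 3
    _ ≤ β ^ 18 * w ^ 12 := by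
      gcongr <;> first | assumption | norm_num
  have hshift : (D : ℝ) + 1 ≤ β ^ 18 * w ^ 12 := calc
    _ ≤ β ^ 18 := hDβ.trans (le_self_pow₀ hβ1 (by norm_num))
    _ ≤ _ := le_mul_of_one_le_right (by positivity) (one_le_pow₀ hw1)
  have hpi3 := pi3_le (zero_le_one.trans hx) ha haD hB (Nat.floor_pos.2 hw1)
  linarith

theorem sum_pi3_le {x : ℝ} (hx : exp 24 ≤ x) (D : ℕ) :
    ∑ a ∈ Finset.Ioo 0 D, (pi3 x a D : ℝ) ≤
      3 * 120 ^ 18 * D ^ 55 * √x + 2 * 2880 ^ 3 * D ^ 10 * (x / Real.log x ^ 3) := by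
  have hx0 : 0 < x := (exp_pos 24).trans_le hx
  have hx1 : 1 ≤ x := (one_le_exp (by norm_num)).trans hx
  set w : ℝ := x ^ (1 / 24 : ℝ) with hw
  have hlog : Real.log w = Real.log x / 24 := by
    rw [hw, log_rpow hx0]
    ring
  have hexp : exp 1 ≤ w := by
    rw [← le_log_iff_exp_le (by positivity), hlog, one_le_div (by norm_num)]
    exact (le_log_iff_exp_le hx0).2 hx
  have hw12 : w ^ 12 = √x := by
    rw [hw, ← rpow_natCast, ← rpow_mul hx0.le, sqrt_eq_rpow]
    norm_num
  calc ∑ a ∈ Finset.Ioo 0 D, (pi3 x a D : ℝ)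
      ≤ (Finset.Ioo 0 D).card • (3 * ((120 * (D : ℝ) ^ 3) ^ 18 * w ^ 12) +
          2 * x / (Real.log w / (120 * (D : ℝ) ^ 3)) ^ 3) :=
        Finset.sum_le_card_nsmul _ _ _ fun a ha =>
          pi3_le_of_exp_one_le hx1 hexp (Finset.mem_Ioo.1 ha).1 (Finset.mem_Ioo.1 ha).2
    _ ≤ (D : ℝ) * (3 * ((120 * (D : ℝ) ^ 3) ^ 18 * √x) +
          2 * x / (Real.log x / 24 / (120 * (D : ℝ) ^ 3)) ^ 3) := by
        have hlog0 : 0 ≤ Real.log x := log_nonneg hx1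
        rw [nsmul_eq_mul, hw12, hlog, Nat.card_Ioo]
        gcongr
        lia
    _ = _ := by
        field_simp
        ring

theorem eventually_log_pow_mul_sqrt_le {c : ℝ} (hc : 0 < c) :
    ∀ᶠ x : ℝ in atTop, Real.log x ^ 3 * √x ≤ c * (x / Real.log x ^ 2) := by
  filter_upwards [(isLittleO_log_rpow_rpow_atTop 5 (half_pos one_pos)).def hc,
    eventually_gt_atTop 1] with x hx hx1
  have hlog : 0 < Real.log x := log_pos hx1
  have hsqrt : Real.log x ^ 5 ≤ c * √x := by
    rw [norm_of_nonneg (by positivity), norm_of_nonneg (by positivity), ← sqrt_eq_rpow] at hx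
    exact mod_cast hx
  rw [← mul_div_assoc, le_div_iff₀ (by positivity)]
  calc Real.log x ^ 3 * √x * Real.log x ^ 2 = Real.log x ^ 5 * √x := by ring
    _ ≤ c * √x * √x := by gcongr
    _ = c * x := by rw [mul_assoc, mul_self_sqrt (by linarith)]

theorem eventually_sqrt_log_mul_le {c : ℝ} (hc : 0 < c) :
    ∀ᶠ x : ℝ in atTop, √(Real.log x) * (x / Real.log x ^ 3) ≤ c * (x / Real.log x ^ 2) := by
  filter_upwards [(tendsto_sqrt_atTop.comp tendsto_log_atTop).eventually_ge_atTop (1 / c),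
    eventually_gt_atTop 1] with x hx hx1
  have hlog : 0 < Real.log x := log_pos hx1
  have hle : √(Real.log x) ≤ c * Real.log x := calc
    √(Real.log x) ≤ c * √(Real.log x) * √(Real.log x) :=
      le_mul_of_one_le_left (sqrt_nonneg _) (by rwa [mul_comm, ← div_le_iff₀ hc])
    _ = c * Real.log x := by rw [mul_assoc, mul_self_sqrt hlog.le]
  calc √(Real.log x) * (x / Real.log x ^ 3) ≤ c * Real.log x * (x / Real.log x ^ 3) := by gcongr
    _ = c * (x / Real.log x ^ 2) := by field_simp

theorem eventually_sum_pi3_le {δ : ℝ} (hδ : 0 < δ) :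
    ∀ᶠ x : ℝ in atTop, ∀ D : ℕ, (D : ℝ) ^ 20 ≤ Real.log x →
      ∑ a ∈ Finset.Ioo 0 D, (pi3 x a D : ℝ) ≤ δ * (x / Real.log x ^ 2) := by
  set c₁ : ℝ := 3 * 120 ^ 18
  set c₂ : ℝ := 2 * 2880 ^ 3
  filter_upwards [eventually_log_pow_mul_sqrt_le (c := δ / 2 / c₁) (by positivity),
    eventually_sqrt_log_mul_le (c := δ / 2 / c₂) (by positivity),
    eventually_ge_atTop (exp 24)] with x hx₁ hx₂ hx D hD
  have hx0 : 0 < x := (exp_pos 24).trans_le hx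
  have hx1 : 1 ≤ x := (one_le_exp (by norm_num)).trans hx
  have hlog : 0 ≤ Real.log x := log_nonneg hx1
  rcases D.eq_zero_or_pos with rfl | hD0
  · simp only [Finset.Ioo_self, Finset.sum_empty]
    positivity
  have hD1 : (1 : ℝ) ≤ D := mod_cast hD0
  have hD55 : (D : ℝ) ^ 55 ≤ Real.log x ^ 3 := calc
    (D : ℝ) ^ 55 ≤ (D : ℝ) ^ (20 * 3) := pow_le_pow_right₀ hD1 (by norm_num)
    _ = ((D : ℝ) ^ 20) ^ 3 := pow_mul _ _ _
    _ ≤ Real.log x ^ 3 := by gcongr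
  have hD10 : (D : ℝ) ^ 10 ≤ √(Real.log x) :=
    le_sqrt_of_sq_le (by rwa [← pow_mul])
  calc ∑ a ∈ Finset.Ioo 0 D, (pi3 x a D : ℝ)
      ≤ c₁ * D ^ 55 * √x + c₂ * D ^ 10 * (x / Real.log x ^ 3) := sum_pi3_le hx D
    _ ≤ c₁ * Real.log x ^ 3 * √x + c₂ * √(Real.log x) * (x / Real.log x ^ 3) := by gcongr
    _ = c₁ * (Real.log x ^ 3 * √x) + c₂ * (√(Real.log x) * (x / Real.log x ^ 3)) := by ring
    _ ≤ c₁ * (δ / 2 / c₁ * (x / Real.log x ^ 2)) + c₂ * (δ / 2 / c₂ * (x / Real.log x ^ 2)) := by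
        gcongr
    _ = δ * (x / Real.log x ^ 2) := by
        field_simp
        ring

/-! ### Pairs of consecutive primes -/

/-- The larger members of the pairs of consecutive primes at distance `d` that lie below `x`. -/
def gapPrimes (x : ℝ) (d : ℕ) : Set ℕ :=
  {q | q.Prime ∧ (q : ℝ) ≤ x ∧ (q - d).Prime ∧ ∀ r, q - d < r → r < q → ¬ r.Prime}

theorem finite_of_forall_natCast_le {s : Set ℕ} {x : ℝ} (hs : ∀ q ∈ s, (q : ℝ) ≤ x) : s.Finite :=
  (Set.finite_Iic ⌊x⌋₊).subset fun q hq => Nat.le_floor (hs q hq)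

theorem finite_gapPrimes (x : ℝ) (d : ℕ) : (gapPrimes x d).Finite :=
  finite_of_forall_natCast_le fun _ hq => hq.2.1

theorem nth_prime_succ_sub_eq_iff {k d : ℕ} (hd : 0 < d) :
    Nat.nth Nat.Prime (k + 1) - Nat.nth Nat.Prime k = d ↔
      (Nat.nth Nat.Prime (k + 1) - d).Prime ∧
        ∀ r, Nat.nth Nat.Prime (k + 1) - d < r → r < Nat.nth Nat.Prime (k + 1) → ¬ r.Prime := by
  have hlt : Nat.nth Nat.Prime k < Nat.nth Nat.Prime (k + 1) :=
    Nat.nth_strictMono Nat.infinite_setOfPred_prime k.lt_succ_self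
  constructor
  · intro h
    have hsub : Nat.nth Nat.Prime (k + 1) - d = Nat.nth Nat.Prime k := by omega
    rw [hsub]
    exact ⟨Nat.prime_nth_prime k, fun r hkr hrk hr =>
      hkr.not_ge (Nat.le_nth_of_lt_nth_succ hrk hr)⟩
  · rintro ⟨hprime, hgap⟩
    have hle : Nat.nth Nat.Prime (k + 1) - d ≤ Nat.nth Nat.Prime k :=
      Nat.le_nth_of_lt_nth_succ (by omega) hprime
    have hge : Nat.nth Nat.Prime k ≤ Nat.nth Nat.Prime (k + 1) - d :=
      not_lt.1 fun h => hgap _ h hlt (Nat.prime_nth_prime k)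
    have hpos := hprime.pos
    omega

theorem exists_nth_prime_succ_eq {q r : ℕ} (hq : q.Prime) (hr : r.Prime) (hrq : r < q) :
    ∃ k, Nat.nth Nat.Prime (k + 1) = q :=
  ⟨Nat.count Nat.Prime q - 1, by
    rw [Nat.sub_add_cancel ((Nat.count_strict_mono hr hrq).pos), Nat.nth_count hq]⟩

theorem N_eq_ncard_gapPrimes (x : ℝ) {d : ℕ} (hd : 0 < d) : N x d = (gapPrimes x d).ncard := by
  have himage : (fun k => Nat.nth Nat.Prime (k + 1)) ''
      {k | (Nat.nth Nat.Prime (k + 1) : ℝ) ≤ x ∧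
        Nat.nth Nat.Prime (k + 1) - Nat.nth Nat.Prime k = d} = gapPrimes x d := by
    ext q
    constructor
    · rintro ⟨k, ⟨hkx, hkd⟩, rfl⟩
      exact ⟨Nat.prime_nth_prime _, hkx, (nth_prime_succ_sub_eq_iff hd).1 hkd⟩
    · rintro ⟨hq, hqx, hqd, hgap⟩
      obtain ⟨k, rfl⟩ := exists_nth_prime_succ_eq hq hqd (Nat.sub_lt hq.pos hd)
      exact ⟨k, ⟨hqx, (nth_prime_succ_sub_eq_iff hd).2 ⟨hqd, hgap⟩⟩, rfl⟩
  have hindex : (fun k => k + 2) '' {k | (Nat.nth Nat.Prime (k + 1) : ℝ) ≤ x ∧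
        Nat.nth Nat.Prime (k + 1) - Nat.nth Nat.Prime k = d} =
      {n | 2 ≤ n ∧ (nthPrime n : ℝ) ≤ x ∧ nthPrime n - nthPrime (n - 1) = d} := by
    ext n
    constructor
    · rintro ⟨k, hk, rfl⟩
      exact ⟨Nat.le_add_left 2 k, hk⟩
    · rintro ⟨hn, hk⟩
      obtain ⟨k, rfl⟩ := Nat.exists_eq_add_of_le' hn
      exact ⟨k, hk, rfl⟩
  have hinj : Function.Injective fun k => Nat.nth Nat.Prime (k + 1) :=
    (Nat.nth_strictMono Nat.infinite_setOfPred_prime).injective.comp (add_left_injective 1)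
  rw [N, ← hindex, ← himage, Set.ncard_image_of_injective _ (add_left_injective 2),
    Set.ncard_image_of_injective _ hinj]

theorem N_le_pi2 (x : ℝ) {d : ℕ} (hd : 0 < d) : N x d ≤ pi2 x d := by
  rw [N_eq_ncard_gapPrimes x hd]
  exact Set.ncard_le_ncard (fun q hq => ⟨hq.1, hq.2.1, hq.2.2.1⟩)
    (finite_of_forall_natCast_le fun _ hq => hq.2.1)

theorem N_le_one_of_odd (x : ℝ) {d : ℕ} (hd : Odd d) : N x d ≤ 1 := by
  have hsub : gapPrimes x d ⊆ {d + 2} := by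
    rintro q ⟨hq, -, hqd, -⟩
    have hle : d ≤ q := (Nat.lt_of_sub_pos hqd.pos).le
    have hd0 := hd.pos
    have htwo : q - d = 2 := by
      by_contra hne
      have heven : Even q := Nat.sub_add_cancel hle ▸ (hqd.odd_of_ne_two hne).add_odd hd
      have := hq.even_iff.1 heven
      have := hqd.two_le
      omega
    rw [Set.mem_singleton_iff]
    omega
  rw [N_eq_ncard_gapPrimes x hd.pos]
  exact (Set.ncard_le_ncard hsub).trans_eq (Set.ncard_singleton _)

theorem N_mul_le {x : ℝ} (hx : 0 ≤ x) {d : ℕ} (hd : 0 < d) : (N x d : ℝ) * d ≤ x := by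
  set E := (finite_gapPrimes x d).toFinset
  have hmem : ∀ q ∈ E, q ∈ gapPrimes x d := fun q hq => (Set.Finite.mem_toFinset _).1 hq
  -- The intervals `(q - d, q]` that end the gaps of length `d` are disjoint and lie in `(0, x]`.
  have hdisj : (E : Set ℕ).PairwiseDisjoint fun q => Finset.Ioc (q - d) q := by
    have key : ∀ q ∈ E, ∀ r ∈ E, q < r →
        Disjoint (Finset.Ioc (q - d) q) (Finset.Ioc (r - d) r) := fun q hq r hr hqr => by
      have hqrd : q ≤ r - d := not_lt.1 fun h => (hmem r hr).2.2.2 q h hqr (hmem q hq).1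
      exact Finset.Ioc_disjoint_Ioc_of_le hqrd
    intro q hq r hr hne
    rcases hne.lt_or_gt with h | h
    · exact key q hq r hr h
    · exact (key r hr q hq h).symm
  have hcard : ∀ q ∈ E, (Finset.Ioc (q - d) q).card = d := fun q hq => by
    have := (hmem q hq).2.2.1.pos
    rw [Nat.card_Ioc]
    omega
  have hsub : E.biUnion (fun q => Finset.Ioc (q - d) q) ⊆ Finset.Ioc 0 ⌊x⌋₊ := by
    refine Finset.biUnion_subset.2 fun q hq => Finset.Ioc_subset_Ioc (Nat.zero_le _) ?_
    exact Nat.le_floor (hmem q hq).2.1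
  have hle : N x d * d ≤ ⌊x⌋₊ := by
    calc N x d * d = ∑ q ∈ E, (Finset.Ioc (q - d) q).card := by
          rw [Finset.sum_congr rfl hcard, Finset.sum_const, smul_eq_mul,
            N_eq_ncard_gapPrimes x hd, Set.ncard_eq_toFinset_card _ (finite_gapPrimes x d)]
      _ = (E.biUnion fun q => Finset.Ioc (q - d) q).card := (Finset.card_biUnion hdisj).symm
      _ ≤ (Finset.Ioc 0 ⌊x⌋₊).card := Finset.card_le_card hsub
      _ = ⌊x⌋₊ := by rw [Nat.card_Ioc, Nat.sub_zero]
  calc (N x d : ℝ) * d ≤ ⌊x⌋₊ := mod_cast hle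
    _ ≤ x := Nat.floor_le hx

theorem pi2_le_N_add_sum_pi3 (x : ℝ) {d : ℕ} (hd : 0 < d) :
    pi2 x d ≤ N x d + ∑ a ∈ Finset.Ioo 0 d, pi3 x a d := by
  have hcover : {q : ℕ | q.Prime ∧ (q : ℝ) ≤ x ∧ (q - d).Prime} ⊆
      gapPrimes x d ∪ ⋃ a ∈ Finset.Ioo 0 d,
        {q : ℕ | q.Prime ∧ (q : ℝ) ≤ x ∧ (q - a).Prime ∧ (q - d).Prime} := by
    rintro q ⟨hq, hqx, hqd⟩
    by_cases hgap : ∀ r, q - d < r → r < q → ¬ r.Prime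
    · exact Or.inl ⟨hq, hqx, hqd, hgap⟩
    · push Not at hgap
      obtain ⟨r, hdr, hrq, hr⟩ := hgap
      have hmem : q - r ∈ Finset.Ioo 0 d := Finset.mem_Ioo.2 (by omega)
      exact Or.inr (Set.mem_iUnion₂.2 ⟨q - r, hmem, hq, hqx,
        (Nat.sub_sub_self hrq.le).symm ▸ hr, hqd⟩)
  have hfinite : (gapPrimes x d ∪ ⋃ a ∈ Finset.Ioo 0 d,
      {q : ℕ | q.Prime ∧ (q : ℝ) ≤ x ∧ (q - a).Prime ∧ (q - d).Prime}).Finite :=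
    (finite_gapPrimes x d).union <| (Finset.finite_toSet _).biUnion fun _ _ =>
      finite_of_forall_natCast_le fun _ hq => hq.2.1
  calc pi2 x d ≤ _ := Set.ncard_le_ncard hcover hfinite
    _ ≤ (gapPrimes x d).ncard + _ := Set.ncard_union_le _ _
    _ ≤ N x d + ∑ a ∈ Finset.Ioo 0 d, pi3 x a d := by
        rw [N_eq_ncard_gapPrimes x hd]
        exact Nat.add_le_add_left (Finset.set_ncard_biUnion_le _ _) _

/-! ### The singular series of a primorial -/

theorem C2_pos : 0 < C2 := by
  have hge : ∀ q : {q : ℕ // q.Prime ∧ 2 < q}, (3 : ℝ) ≤ (q : ℕ) := fun q => mod_cast q.2.2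
  have hle : ∀ q : {q : ℕ // q.Prime ∧ 2 < q}, 1 / ((q : ℕ) - 1 : ℝ) ^ 2 ≤ 4 * (1 / (q : ℝ) ^ 2) :=
    fun q => by
      have := hge q
      rw [mul_one_div, div_le_div_iff₀ (by nlinarith) (by nlinarith)]
      nlinarith
  have hsummable : Summable fun q : {q : ℕ // q.Prime ∧ 2 < q} => -(1 / ((q : ℕ) - 1 : ℝ) ^ 2) :=
    (Summable.of_nonneg_of_le (fun q => by positivity) hle
      (((summable_one_div_nat_pow.2 one_lt_two).mul_left 4).comp_injective
        Subtype.val_injective)).neg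
  have hpos : ∀ q : {q : ℕ // q.Prime ∧ 2 < q}, 0 < 1 + -(1 / ((q : ℕ) - 1 : ℝ) ^ 2) := fun q => by
    have := hge q
    rw [← sub_eq_add_neg, sub_pos, div_lt_one (by nlinarith)]
    nlinarith
  simp only [C2, sub_eq_add_neg (1 : ℝ),
    ← rexp_tsum_eq_tprod hpos (summable_log_one_add_of_summable hsummable)]
  exact exp_pos _

/-- The local factor of the singular series at an odd prime `q` dividing the difference. -/
noncomputable def pairFactor (q : ℕ) : ℝ := (q - 1) / (q - 2)

theorem pairFactor_eq_one_add {q : ℕ} (hq : 2 < q) : pairFactor q = 1 + 1 / (q - 2) := by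
  have hq' : (q : ℝ) - 2 ≠ 0 := sub_ne_zero.2 (mod_cast hq.ne')
  rw [pairFactor]
  field_simp
  ring

theorem one_le_pairFactor {q : ℕ} (hq : 2 < q) : 1 ≤ pairFactor q := by
  have hq' : (2 : ℝ) < q := mod_cast hq
  rw [pairFactor_eq_one_add hq]
  exact le_add_of_nonneg_right (one_div_nonneg.2 (by linarith))

theorem pairFactor_nonneg {q : ℕ} (hq : 2 < q) : 0 ≤ pairFactor q :=
  zero_le_one.trans (one_le_pairFactor hq)

theorem prod_pairFactor_le_of_subset {s t : Finset ℕ} (hst : s ⊆ t) (ht : ∀ q ∈ t, 2 < q) :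
    ∏ q ∈ s, pairFactor q ≤ ∏ q ∈ t, pairFactor q :=
  Finset.prod_le_prod_of_subset_of_one_le hst
    (fun q hq => pairFactor_nonneg (ht q (hst hq)))
    fun q hq _ => one_le_pairFactor (ht q hq)

theorem singularSeries_of_even {d : ℕ} (hd : Even d) :
    singularSeries d = 2 * C2 * ∏ q ∈ d.primeFactors with 2 < q, pairFactor q :=
  if_pos hd

theorem two_mul_C2_le_singularSeries {d : ℕ} (hd : Even d) : 2 * C2 ≤ singularSeries d := by
  rw [singularSeries_of_even hd]
  exact le_mul_of_one_le_right (mul_pos two_pos C2_pos).le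
    (Finset.one_le_prod fun q hq => one_le_pairFactor (Finset.mem_filter.1 hq).2)

theorem singularSeries_nonneg {d : ℕ} (hd : Even d) : 0 ≤ singularSeries d :=
  (mul_pos two_pos C2_pos).le.trans (two_mul_C2_le_singularSeries hd)

theorem even_primorial {z : ℕ} (hz : 2 ≤ z) : Even (primorial z) :=
  even_iff_two_dvd.2 (Nat.prime_two.dvd_primorial_iff.2 hz)

theorem card_filter_primeFactors_mul_log_le {d : ℕ} (hd : d ≠ 0) {z : ℕ} (hz : 0 < z) :
    ({q ∈ d.primeFactors | z < q}.card : ℝ) * Real.log z ≤ Real.log d := by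
  have hle : z ^ {q ∈ d.primeFactors | z < q}.card ≤ d := calc
    z ^ {q ∈ d.primeFactors | z < q}.card ≤ ∏ q ∈ d.primeFactors with z < q, q :=
      Finset.pow_card_le_prod _ _ _ fun q hq => (Finset.mem_filter.1 hq).2.le
    _ ≤ d := Nat.le_of_dvd (Nat.pos_of_ne_zero hd) <|
      (Finset.prod_dvd_prod_of_subset _ _ _ (Finset.filter_subset _ _)).trans
        (Nat.prod_primeFactors_dvd d)
  rw [← Real.log_pow]
  exact log_le_log (by positivity) (mod_cast hle)

theorem prod_pairFactor_le_exp {d : ℕ} (hd : d ≠ 0) {z : ℕ} (hz : 2 ≤ z) :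
    ∏ q ∈ d.primeFactors with z < q, pairFactor q ≤
      exp (Real.log d / ((z - 1) * Real.log z)) := by
  have hz' : (2 : ℝ) ≤ z := mod_cast hz
  have hlog : 0 < Real.log z := log_pos (by linarith)
  have hfactor : ∀ q ∈ {q ∈ d.primeFactors | z < q}, pairFactor q ≤ exp (1 / (z - 1)) :=
    fun q hq => by
      have hzq := (Finset.mem_filter.1 hq).2
      have hzq' : (z : ℝ) + 1 ≤ q := mod_cast hzq
      calc pairFactor q = 1 / (q - 2) + 1 := by
            rw [pairFactor_eq_one_add (hz.trans_lt hzq), add_comm]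
        _ ≤ 1 / (z - 1) + 1 := by
            gcongr ?_ + 1
            exact one_div_le_one_div_of_le (by linarith) (by linarith)
        _ ≤ exp (1 / (z - 1)) := add_one_le_exp _
  calc ∏ q ∈ d.primeFactors with z < q, pairFactor q
      ≤ exp (1 / (z - 1)) ^ {q ∈ d.primeFactors | z < q}.card :=
        (Finset.prod_le_prod (fun q hq =>
          pairFactor_nonneg (hz.trans_lt (Finset.mem_filter.1 hq).2)) hfactor).trans_eq
          (Finset.prod_const _)
    _ = exp ({q ∈ d.primeFactors | z < q}.card * (1 / (z - 1))) := (exp_nat_mul _ _).symm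
    _ ≤ exp (Real.log d / Real.log z * (1 / (z - 1))) := by
        gcongr
        · exact one_div_nonneg.2 (by linarith)
        · exact (le_div_iff₀ hlog).2 (card_filter_primeFactors_mul_log_le hd (by linarith))
    _ = exp (Real.log d / ((z - 1) * Real.log z)) := by
        rw [div_mul_div_comm, mul_one, mul_comm (Real.log z)]

theorem prod_pairFactor_le_of_not_dvd {p d z : ℕ} (hp : p.Prime) (hp2 : 2 < p) (hpz : p ≤ z)
    (hpd : ¬ p ∣ d) :
    ∏ q ∈ d.primeFactors with 2 < q ∧ q ≤ z, pairFactor q ≤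
      (p - 2) / (p - 1) * ∏ q ∈ (primorial z).primeFactors with 2 < q, pairFactor q := by
  have hp2' : (2 : ℝ) < p := mod_cast hp2
  set S : Finset ℕ := {q ∈ (primorial z).primeFactors | 2 < q} with hS
  have hmem : ∀ {q}, q ∈ S ↔ (q ≤ z ∧ q.Prime) ∧ 2 < q := by
    simp only [hS, primeFactors_primorial, Finset.mem_filter, Nat.mem_primesLE, implies_true]
  have hsub : {q ∈ d.primeFactors | 2 < q ∧ q ≤ z} ⊆ S.erase p := fun q hq => by
    obtain ⟨hqd, hq2, hqz⟩ := Finset.mem_filter.1 hq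
    refine Finset.mem_erase.2 ⟨?_, hmem.2 ⟨⟨hqz, Nat.prime_of_mem_primeFactors hqd⟩, hq2⟩⟩
    rintro rfl
    exact hpd (Nat.dvd_of_mem_primeFactors hqd)
  have hcancel : ((p : ℝ) - 2) / (p - 1) * pairFactor p = 1 := by
    have h2 : (p : ℝ) - 2 ≠ 0 := by linarith
    have h1 : (p : ℝ) - 1 ≠ 0 := by linarith
    rw [pairFactor]
    field_simp
  calc ∏ q ∈ d.primeFactors with 2 < q ∧ q ≤ z, pairFactor q
      ≤ ∏ q ∈ S.erase p, pairFactor q :=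
        prod_pairFactor_le_of_subset hsub fun q hq => (hmem.1 (Finset.mem_of_mem_erase hq)).2
    _ = (p - 2) / (p - 1) * ∏ q ∈ S, pairFactor q := by
        rw [← Finset.mul_prod_erase S pairFactor (hmem.2 ⟨⟨hpz, hp⟩, hp2⟩), ← mul_assoc, hcancel,
          one_mul]

theorem singularSeries_le_of_not_dvd {p d z : ℕ} (hp : p.Prime) (hpz : p ≤ z) (hd : Even d)
    (hd0 : d ≠ 0) (hpd : ¬ p ∣ d) :
    singularSeries d ≤ (p - 2) / (p - 1) * singularSeries (primorial z) *
      exp (Real.log d / ((z - 1) * Real.log z)) := by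
  have hp2 : 2 < p := hp.two_le.lt_of_ne fun h => hpd (h ▸ hd.two_dvd)
  have hz : 2 < z := hp2.trans_le hpz
  have hC2 := C2_pos
  set S : Finset ℕ := {q ∈ d.primeFactors | 2 < q} with hS
  have hsmall : S.filter (· ≤ z) = {q ∈ d.primeFactors | 2 < q ∧ q ≤ z} :=
    Finset.filter_filter _ _ _
  have hlarge : S.filter (¬ · ≤ z) = {q ∈ d.primeFactors | z < q} := by
    rw [hS, Finset.filter_filter]
    exact Finset.filter_congr fun q _ => ⟨fun h => not_le.1 h.2, fun h => ⟨hz.trans h, not_le.2 h⟩⟩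
  rw [singularSeries_of_even hd, singularSeries_of_even (even_primorial hz.le),
    ← Finset.prod_filter_mul_prod_filter_not S (· ≤ z), hsmall, hlarge]
  set R := ∏ q ∈ (primorial z).primeFactors with 2 < q, pairFactor q
  have hsmall_nonneg : 0 ≤ ∏ q ∈ d.primeFactors with 2 < q ∧ q ≤ z, pairFactor q :=
    Finset.prod_nonneg fun q hq => pairFactor_nonneg (Finset.mem_filter.1 hq).2.1
  have hlarge_nonneg : 0 ≤ ∏ q ∈ d.primeFactors with z < q, pairFactor q :=
    Finset.prod_nonneg fun q hq => pairFactor_nonneg (hz.trans (Finset.mem_filter.1 hq).2)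
  calc 2 * C2 * ((∏ q ∈ d.primeFactors with 2 < q ∧ q ≤ z, pairFactor q) *
        ∏ q ∈ d.primeFactors with z < q, pairFactor q)
      ≤ 2 * C2 * (((p - 2) / (p - 1) * R) * exp (Real.log d / ((z - 1) * Real.log z))) := by
        have hle := prod_pairFactor_le_of_not_dvd hp hp2 hpz hpd
        gcongr ?_ * ?_
        exact mul_le_mul hle (prod_pairFactor_le_exp hd0 hz.le) hlarge_nonneg
          (hsmall_nonneg.trans hle)
    _ = (p - 2) / (p - 1) * (2 * C2 * R) * exp (Real.log d / ((z - 1) * Real.log z)) := by ring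

theorem one_add_sum_le_prod_one_add {ι : Type*} (s : Finset ι) {f : ι → ℝ}
    (hf : ∀ i ∈ s, 0 ≤ f i) : 1 + ∑ i ∈ s, f i ≤ ∏ i ∈ s, (1 + f i) := by
  classical
  induction s using Finset.induction_on with
  | empty => simp
  | insert a s ha ih =>
    have hfs : ∀ i ∈ s, 0 ≤ f i := fun i hi => hf i (Finset.mem_insert_of_mem hi)
    have hfa : 0 ≤ f a := hf a (Finset.mem_insert_self a s)
    rw [Finset.sum_insert ha, Finset.prod_insert ha]
    calc 1 + (f a + ∑ i ∈ s, f i) ≤ (1 + f a) * (1 + ∑ i ∈ s, f i) := by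
          have := mul_nonneg hfa (Finset.sum_nonneg hfs)
          linarith
      _ ≤ (1 + f a) * ∏ i ∈ s, (1 + f i) := by
          gcongr
          exact ih hfs

theorem sum_primesLE_one_div_le_prod_pairFactor (z : ℕ) :
    ∑ q ∈ Nat.primesLE z, (1 / q : ℝ) ≤
      ∏ q ∈ (primorial z).primeFactors with 2 < q, pairFactor q := by
  rw [primeFactors_primorial]
  have hsub : Nat.primesLE z ⊆ insert 2 {q ∈ Nat.primesLE z | 2 < q} := fun q hq => by
    rcases (Nat.prime_of_mem_primesLE hq).two_le.eq_or_lt with rfl | h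
    · exact Finset.mem_insert_self _ _
    · exact Finset.mem_insert_of_mem (Finset.mem_filter.2 ⟨hq, h⟩)
  have hlt : ∀ q ∈ {q ∈ Nat.primesLE z | 2 < q}, (2 : ℝ) < q := fun q hq =>
    mod_cast (Finset.mem_filter.1 hq).2
  calc ∑ q ∈ Nat.primesLE z, (1 / q : ℝ)
      ≤ ∑ q ∈ insert 2 {q ∈ Nat.primesLE z | 2 < q}, (1 / q : ℝ) :=
        Finset.sum_le_sum_of_subset_of_nonneg hsub fun _ _ _ => by positivity
    _ = 1 / 2 + ∑ q ∈ Nat.primesLE z with 2 < q, (1 / q : ℝ) := by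
        rw [Finset.sum_insert fun h => (Finset.mem_filter.1 h).2.false, Nat.cast_ofNat]
    _ ≤ 1 + ∑ q ∈ Nat.primesLE z with 2 < q, 1 / ((q : ℝ) - 2) := by
        gcongr with q hq
        · norm_num
        · linarith [hlt q hq]
        · linarith
    _ ≤ ∏ q ∈ Nat.primesLE z with 2 < q, (1 + 1 / ((q : ℝ) - 2)) :=
        one_add_sum_le_prod_one_add _ fun q hq => one_div_nonneg.2 (by linarith [hlt q hq])
    _ = ∏ q ∈ Nat.primesLE z with 2 < q, pairFactor q :=
        Finset.prod_congr rfl fun q hq => (pairFactor_eq_one_add (Finset.mem_filter.1 hq).2).symm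

theorem tendsto_singularSeries_primorial :
    Tendsto (fun z => singularSeries (primorial z)) atTop atTop := by
  have hdiv : Tendsto (fun z => ∑ q ∈ Nat.primesLE z, (1 / q : ℝ)) atTop atTop := by
    have := (not_summable_iff_tendsto_nat_atTop_of_nonneg fun n => Set.indicator_nonneg
      (fun _ _ => by positivity) n).1 not_summable_one_div_on_primes
    refine (this.comp (tendsto_add_atTop_nat 1)).congr fun z => ?_
    exact Finset.sum_indicator_eq_sum_filter _ _ _ _
  refine tendsto_atTop_mono' atTop ?_ (hdiv.const_mul_atTop (mul_pos two_pos C2_pos))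
  filter_upwards [eventually_ge_atTop 2] with z hz
  rw [singularSeries_of_even (even_primorial hz)]
  exact mul_le_mul_of_nonneg_left (sum_primesLE_one_div_le_prod_pairFactor z)
    (mul_pos two_pos C2_pos).le

/-! ### Comparison with primorial gaps -/

/-- The Hardy–Littlewood prime pair conjecture, uniformly for even `d` with `2 ≤ d ≤ (log x)²`. -/
def UniformPrimePairs : Prop :=
  ∀ ε : ℝ, 0 < ε → ∃ x₀ : ℝ, ∀ x ≥ x₀, ∀ d : ℕ, Even d → 2 ≤ d → (d : ℝ) ≤ Real.log x ^ 2 →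
    |(pi2 x d : ℝ) - singularSeries d * x / Real.log x ^ 2| ≤
      ε * singularSeries d * x / Real.log x ^ 2

/-- The bound up to which primes are multiplied to form the gap that every other gap is compared
with below `x`. The constant `40` makes the twentieth power of that primorial at most `log x`. -/
noncomputable def primorialScale (x : ℝ) : ℕ := ⌊Real.log (Real.log x) / 40⌋₊

theorem tendsto_primorialScale : Tendsto primorialScale atTop atTop :=
  tendsto_nat_floor_atTop.comp
    ((tendsto_log_atTop.comp tendsto_log_atTop).atTop_div_const (by norm_num))

theorem primorial_primorialScale_pow_le {x : ℝ} (hx : 1 ≤ Real.log x) :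
    (primorial (primorialScale x) : ℝ) ^ 20 ≤ Real.log x := by
  set z := primorialScale x with hz
  have hz_le : 40 * (z : ℝ) ≤ Real.log (Real.log x) := by
    have := Nat.floor_le (div_nonneg (log_nonneg hx) (by norm_num : (0 : ℝ) ≤ 40))
    rw [hz, primorialScale]
    linarith
  have htwo : (2 : ℝ) ≤ exp 1 := by linarith [add_one_le_exp (1 : ℝ)]
  calc (primorial z : ℝ) ^ 20 ≤ (4 ^ z) ^ 20 := by
        gcongr
        exact_mod_cast primorial_le_four_pow z
    _ = 2 ^ (40 * z) := by
        rw [← pow_mul, show (4 : ℝ) = 2 ^ 2 by norm_num, ← pow_mul]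
        ring_nf
    _ ≤ exp 1 ^ (40 * z) := by gcongr
    _ = exp (40 * z) := by rw [← exp_nat_mul, mul_one, Nat.cast_mul, Nat.cast_ofNat]
    _ ≤ exp (Real.log (Real.log x)) := exp_le_exp.2 hz_le
    _ = Real.log x := exp_log (by linarith)

theorem eventually_one_le_div_log_sq : ∀ᶠ x : ℝ in atTop, 1 ≤ x / Real.log x ^ 2 := by
  have hlim := (tendsto_pow_log_div_mul_add_atTop 1 0 2 one_ne_zero).eventually_lt_const one_pos
  filter_upwards [hlim, eventually_gt_atTop 1] with x hx hx1
  have hx0 : 0 < x := by linarith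
  rw [one_mul, add_zero, div_lt_one hx0] at hx
  exact (one_le_div (pow_pos (log_pos hx1) 2)).2 hx.le

theorem eventually_exp_log_div_lt {C : ℝ} (hC : 1 < C) :
    ∀ᶠ x : ℝ in atTop, ∀ d : ℕ, 0 < d → (d : ℝ) ≤ Real.log x ^ 2 →
      exp (Real.log d / ((primorialScale x - 1) * Real.log (primorialScale x))) < C := by
  have hlogScale : Tendsto (fun x => Real.log (primorialScale x)) atTop atTop :=
    tendsto_log_atTop.comp (tendsto_natCast_atTop_atTop.comp tendsto_primorialScale)
  have hlim := hlogScale.const_div_atTop 240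
  filter_upwards [hlim.eventually_lt_const (log_pos hC),
    tendsto_primorialScale.eventually_ge_atTop 2] with x hx hz d hd0 hd
  set z := primorialScale x
  have hz' : (2 : ℝ) ≤ z := mod_cast hz
  have hfloor : Real.log (Real.log x) / 40 < z + 1 := Nat.lt_floor_add_one _
  have hlogd : Real.log d ≤ 240 * (z - 1) := calc
    Real.log d ≤ Real.log (Real.log x ^ 2) := log_le_log (mod_cast hd0) hd
    _ = 2 * Real.log (Real.log x) := by rw [Real.log_pow, Nat.cast_ofNat]
    _ ≤ 240 * (z - 1) := by linarith
  have hlogz : 0 < Real.log z := log_pos (by linarith)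
  refine (lt_log_iff_exp_lt (by linarith)).1 (lt_of_le_of_lt ?_ hx)
  rw [← div_div]
  gcongr
  exact (div_le_iff₀ (by linarith)).2 hlogd

theorem eventually_singularSeries_le {p : ℕ} (hp : p.Prime) {c : ℝ}
    (hc : ((p : ℝ) - 2) / (p - 1) < c) :
    ∀ᶠ x : ℝ in atTop, ∀ d : ℕ, Even d → 0 < d → (d : ℝ) ≤ Real.log x ^ 2 → ¬ p ∣ d →
      singularSeries d ≤ c * singularSeries (primorial (primorialScale x)) := by
  have hp2 : (2 : ℝ) ≤ p := mod_cast hp.two_le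
  set a : ℝ := (p - 2) / (p - 1)
  have ha0 : 0 ≤ a := div_nonneg (by linarith) (by linarith)
  have ha1 : a ≤ 1 := div_le_one_of_le₀ (by linarith) (by linarith)
  filter_upwards [eventually_exp_log_div_lt (C := 1 + (c - a)) (by linarith),
    tendsto_primorialScale.eventually_ge_atTop p] with x hexp hpz d hd hd0 hdx hpd
  have hS : 0 ≤ singularSeries (primorial (primorialScale x)) :=
    singularSeries_nonneg (even_primorial (hp.two_le.trans hpz))
  set S := singularSeries (primorial (primorialScale x))
  calc singularSeries d ≤ a * S * exp _ := singularSeries_le_of_not_dvd hp hpz hd hd0.ne' hpd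
    _ ≤ a * S * (1 + (c - a)) := by
        gcongr
        exact (hexp d hd0 hdx).le
    _ = (a + a * (c - a)) * S := by ring
    _ ≤ (a + 1 * (c - a)) * S := by gcongr
    _ = c * S := by ring

namespace UniformPrimePairs

theorem eventually_abs_pi2_sub_le (h : UniformPrimePairs) {ε : ℝ} (hε : 0 < ε) :
    ∀ᶠ x : ℝ in atTop, ∀ d : ℕ, Even d → 0 < d → (d : ℝ) ≤ Real.log x ^ 2 →
      |(pi2 x d : ℝ) - singularSeries d * (x / Real.log x ^ 2)| ≤
        ε * (singularSeries d * (x / Real.log x ^ 2)) := by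
  obtain ⟨x₀, hx₀⟩ := h ε hε
  filter_upwards [eventually_ge_atTop x₀] with x hx d hd hd0 hdx
  simpa only [mul_div_assoc, mul_assoc] using hx₀ x hx d hd (Nat.le_of_dvd hd0 hd.two_dvd) hdx

theorem eventually_mul_le_N_primorial (h : UniformPrimePairs) {c : ℝ} (hc : c < 1) :
    ∀ᶠ x : ℝ in atTop, c * (singularSeries (primorial (primorialScale x)) *
      (x / Real.log x ^ 2)) ≤ N x (primorial (primorialScale x)) := by
  have hC2 := C2_pos
  set ε : ℝ := (1 - c) / 2 with hε_def
  have hε : 0 < ε := half_pos (sub_pos.2 hc)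
  filter_upwards [h.eventually_abs_pi2_sub_le hε,
    eventually_sum_pi3_le (δ := ε * (2 * C2)) (by positivity),
    tendsto_primorialScale.eventually_ge_atTop 2, tendsto_log_atTop.eventually_ge_atTop 1,
    eventually_ge_atTop 0] with x hpairs htriples hz hlog hx
  have hpow := primorial_primorialScale_pow_le hlog
  have heven := even_primorial hz
  set P := primorial (primorialScale x)
  set T := x / Real.log x ^ 2
  have : 0 ≤ T := by positivity
  have hP0 : 0 < P := primorial_pos _
  have hP1 : (1 : ℝ) ≤ P := mod_cast hP0
  have hPlog : (P : ℝ) ≤ Real.log x ^ 2 := calc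
    (P : ℝ) ≤ (P : ℝ) ^ 20 := le_self_pow₀ hP1 (by norm_num)
    _ ≤ Real.log x := hpow
    _ ≤ Real.log x ^ 2 := le_self_pow₀ hlog two_ne_zero
  have hpi2 : (1 - ε) * (singularSeries P * T) ≤ pi2 x P := by
    have := (abs_le.1 (hpairs P heven hP0 hPlog)).1
    linarith
  have hpi3 : ∑ a ∈ Finset.Ioo 0 P, (pi3 x a P : ℝ) ≤ ε * (singularSeries P * T) := calc
    ∑ a ∈ Finset.Ioo 0 P, (pi3 x a P : ℝ) ≤ ε * (2 * C2) * T := htriples P hpow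
    _ = ε * (2 * C2 * T) := mul_assoc _ _ _
    _ ≤ ε * (singularSeries P * T) := by
        gcongr
        exact two_mul_C2_le_singularSeries heven
  have hN : (pi2 x P : ℝ) ≤ N x P + ∑ a ∈ Finset.Ioo 0 P, (pi3 x a P : ℝ) :=
    mod_cast pi2_le_N_add_sum_pi3 x hP0
  calc c * (singularSeries P * T) = (1 - ε) * (singularSeries P * T) -
        ε * (singularSeries P * T) := by rw [hε_def]; ring
    _ ≤ N x P := by linarith

theorem eventually_N_le_mul (h : UniformPrimePairs) {p : ℕ} (hp : p.Prime) {c : ℝ}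
    (hc : ((p : ℝ) - 2) / (p - 1) < c) :
    ∀ᶠ x : ℝ in atTop, ∀ d : ℕ, Even d → 0 < d → (d : ℝ) ≤ Real.log x ^ 2 → ¬ p ∣ d →
      (N x d : ℝ) ≤
        c * (singularSeries (primorial (primorialScale x)) * (x / Real.log x ^ 2)) := by
  have hp2 : (2 : ℝ) ≤ p := mod_cast hp.two_le
  obtain ⟨b, hb, hbc⟩ := exists_between hc
  have hb0 : 0 < b := (div_nonneg (by linarith) (by linarith)).trans_lt hb
  have hε : 0 < c / b - 1 := sub_pos.2 ((one_lt_div hb0).2 hbc)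
  filter_upwards [h.eventually_abs_pi2_sub_le hε, eventually_singularSeries_le hp hb,
    eventually_ge_atTop 0] with x hpairs hS hx d hd hd0 hdx hpd
  set S := singularSeries (primorial (primorialScale x))
  set T := x / Real.log x ^ 2
  have : 0 ≤ T := by positivity
  have hcb : 0 ≤ c / b := by linarith
  calc (N x d : ℝ) ≤ pi2 x d := mod_cast N_le_pi2 x hd0
    _ ≤ c / b * (singularSeries d * T) := by
        have := (abs_le.1 (hpairs d hd hd0 hdx)).2
        linarith
    _ ≤ c / b * (b * S * T) := by
        gcongr
        exact hS d hd hd0 hdx hpd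
    _ = c * (S * T) := by field_simp

end UniformPrimePairs

theorem N_le_div_log_sq {x : ℝ} (hx : 1 ≤ x / Real.log x ^ 2) {d : ℕ} (hd0 : 0 < d)
    (hd : Even d → Real.log x ^ 2 < d) : (N x d : ℝ) ≤ x / Real.log x ^ 2 := by
  have hlog : 0 < Real.log x ^ 2 := (sq_nonneg _).lt_of_ne fun h => by
    rw [← h, div_zero] at hx
    exact hx.not_gt one_pos
  have hx0 : 0 ≤ x := hlog.le.trans ((one_le_div hlog).1 hx)
  rcases d.even_or_odd with heven | hodd
  · calc (N x d : ℝ) ≤ x / d := (le_div_iff₀ (mod_cast hd0)).2 (N_mul_le hx0 hd0)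
      _ ≤ x / Real.log x ^ 2 := by
          gcongr
          exact (hd heven).le
  · calc (N x d : ℝ) ≤ 1 := mod_cast N_le_one_of_odd x hodd
      _ ≤ x / Real.log x ^ 2 := hx

theorem UniformPrimePairs.eventually_N_lt_N_primorial (h : UniformPrimePairs) {p : ℕ}
    (hp : p.Prime) : ∀ᶠ x : ℝ in atTop, ∀ d : ℕ, 0 < d → ¬ p ∣ d →
      N x d < N x (primorial (primorialScale x)) := by
  have hp2 : (2 : ℝ) ≤ p := mod_cast hp.two_le
  obtain ⟨c, hc, hc1⟩ : ∃ c, ((p : ℝ) - 2) / (p - 1) < c ∧ c < 1 :=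
    exists_between ((div_lt_one (by linarith)).2 (by linarith))
  obtain ⟨c', hcc', hc'1⟩ := exists_between hc1
  have hc'0 : 0 < c' := ((div_nonneg (by linarith) (by linarith)).trans_lt hc).trans hcc'
  filter_upwards [h.eventually_N_le_mul hp hc, h.eventually_mul_le_N_primorial hc'1,
    eventually_one_le_div_log_sq, (tendsto_singularSeries_primorial.comp
      tendsto_primorialScale).eventually_gt_atTop (1 / c')] with x hupper hlower hT hS d hd0 hpd
  set S := singularSeries (primorial (primorialScale x))
  set T := x / Real.log x ^ 2
  have : 0 < T := one_pos.trans_le hT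
  have hS0 : 0 < S := (one_div_pos.2 hc'0).trans hS
  have hlt : (N x d : ℝ) < c' * (S * T) := by
    by_cases hd : Even d ∧ (d : ℝ) ≤ Real.log x ^ 2
    · calc (N x d : ℝ) ≤ c * (S * T) := hupper d hd.1 hd0 hd.2 hpd
        _ < c' * (S * T) := by gcongr
    · calc (N x d : ℝ) ≤ 1 * T := by
            rw [one_mul]
            exact N_le_div_log_sq hT hd0 fun heven => not_le.1 fun hle => hd ⟨heven, hle⟩
        _ < c' * S * T := by
            gcongr
            exact (div_lt_iff₀' hc'0).1 hS
        _ = c' * (S * T) := mul_assoc _ _ _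
  exact_mod_cast hlt.trans_le hlower

/-- Assuming the Hardy–Littlewood prime pair conjecture uniformly for `2 ≤ d ≤ (log x)²`,
every fixed prime divides all sufficiently large jumping champions. -/
theorem fixed_prime_divides_jumping_champions
    (hHL : ∀ ε : ℝ, 0 < ε → ∃ x₀ : ℝ, ∀ x ≥ x₀, ∀ d : ℕ, Even d → 2 ≤ d →
      (d : ℝ) ≤ (Real.log x) ^ 2 →
      |(pi2 x d : ℝ) - singularSeries d * x / (Real.log x) ^ 2| ≤
        ε * singularSeries d * x / (Real.log x) ^ 2) :
    ∀ p : ℕ, p.Prime → ∃ X : ℝ, ∀ x ≥ X, ∀ d : ℕ, JumpingChampion x d → p ∣ d := by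
  intro p hp
  obtain ⟨X, hX⟩ := eventually_atTop.1 (UniformPrimePairs.eventually_N_lt_N_primorial hHL hp)
  refine ⟨X, fun x hx d ⟨hd0, hmax⟩ => ?_⟩
  by_contra hpd
  exact (hX x hx d hd0 hpd).not_ge (hmax _)
end

section
/- There exists a constant C > 0 such that for all integers d, d' with 1 ≤ d' < d and d ≥ 3, the triple singular series satisfies 𝔖({0, d', d}) ≤ C·(log log d)². -/
open Filter Real

/-!
Bernoulli's inequality bounds the local factor at `q` by `(1 - 1/q)^(ν(q) - 3)`, and
`3 - ν(q) ≤ [q ∣ D] + [q ∣ d]` for `D = d d' (d - d')`. Since `∏_{q ∣ n} (1 - 1/q)⁻¹ = n / φ(n)`,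
the singular series is at most `(D / φ(D)) (d / φ(d))`. Now `n / φ(n) ≪ exp(∑_{p ∣ n} 1/p)`, where
the primes `p > m = ⌈log n⌉` contribute at most `ω(n) / m = O(1)` to the sum, and the others at most
`log log m + O(1)` by Mertens' theorem, which follows by partial summation from
`∑_{k ≤ n} Λ(k) ⌊n/k⌋ = log n!`. Hence `n / φ(n) ≪ log log n`, and `log log D ≪ log log d` because
`D ≤ d³`.
-/

section Mertens

open ArithmeticFunction Finset

theorem sum_vonMangoldt_mul_div_le (n : ℕ) :
    ∑ k ∈ Ioc 0 n, Λ k * ((n / k : ℕ) : ℝ) ≤ n * Real.log n := by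
  rw [← sum_Ioc_mul_zeta_eq_sum, vonMangoldt_mul_zeta]
  calc ∑ k ∈ Ioc 0 n, ArithmeticFunction.log k
      ≤ ∑ _k ∈ Ioc 0 n, Real.log n := by
        refine sum_le_sum fun k hk => ?_
        obtain ⟨hk0, hkn⟩ := mem_Ioc.mp hk
        exact Real.log_le_log (mod_cast hk0) (mod_cast hkn)
    _ = n * Real.log n := by simp

theorem sum_vonMangoldt_div_le {n : ℕ} (hn : 0 < n) :
    ∑ k ∈ Ioc 0 n, Λ k / k ≤ Real.log n + (Real.log 4 + 4) := by
  have div_le (k : ℕ) : (n : ℝ) / k ≤ (n / k : ℕ) + 1 := by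
    rw [← Nat.floor_div_eq_div (K := ℝ)]
    exact (Nat.lt_floor_add_one _).le
  have psi_le : ∑ k ∈ Ioc 0 n, Λ k ≤ (Real.log 4 + 4) * n := by
    simpa [Chebyshev.psi] using Chebyshev.psi_le_const_mul_self n.cast_nonneg
  refine le_of_mul_le_mul_left ?_ (Nat.cast_pos (α := ℝ).mpr hn)
  calc n * ∑ k ∈ Ioc 0 n, Λ k / k
      = ∑ k ∈ Ioc 0 n, Λ k * (n / k) := by rw [mul_sum]; congr! 1; ring
    _ ≤ ∑ k ∈ Ioc 0 n, Λ k * ((n / k : ℕ) + 1) := by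
        gcongr with k
        exact div_le k
    _ = ∑ k ∈ Ioc 0 n, Λ k * (n / k : ℕ) + ∑ k ∈ Ioc 0 n, Λ k := by
        simp only [mul_add, mul_one, sum_add_distrib]
    _ ≤ n * (Real.log n + (Real.log 4 + 4)) := by
        linarith [sum_vonMangoldt_mul_div_le n]

theorem one_div_sub_one_div_mul_le {x y s C : ℝ} (hx : 0 < x) (hxy : x ≤ y) (hs : s ≤ x + C) :
    s * (1 / x - 1 / y) ≤ Real.log y - Real.log x + (C / x - C / y) := by
  have hy : 0 < y := hx.trans_le hxy
  have h_inv : 0 ≤ 1 / x - 1 / y := sub_nonneg.mpr (one_div_le_one_div_of_le hx hxy)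
  have h_log : 1 - x / y ≤ Real.log y - Real.log x := by
    simpa [Real.log_div hy.ne' hx.ne'] using Real.one_sub_inv_le_log_of_pos (div_pos hy hx)
  calc s * (1 / x - 1 / y) ≤ (x + C) * (1 / x - 1 / y) := by gcongr
    _ = 1 - x / y + (C / x - C / y) := by field_simp
    _ ≤ Real.log y - Real.log x + (C / x - C / y) := by gcongr

theorem sum_div_le_log_of_sum_le {a g : ℕ → ℝ} {C : ℝ} {m n : ℕ} (hgm : 0 < g m)
    (hg : MonotoneOn g (Set.Ici m)) (ha : ∀ k ≥ m, ∑ i ∈ Icc m k, a i ≤ g k + C) (hmn : m ≤ n) :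
    ∑ k ∈ Icc m n, a k / g k ≤ Real.log (g n) + (1 + C / g m - Real.log (g m)) := by
  have g_pos {k : ℕ} (hk : m ≤ k) : 0 < g k := hgm.trans_le (hg Set.self_mem_Ici hk hk)
  have by_parts : ∑ k ∈ Icc m n, a k / g k ≤
      (∑ k ∈ Icc m n, a k) / g n + (Real.log (g n) - Real.log (g m) + (C / g m - C / g n)) := by
    induction n, hmn using Nat.le_induction with
    | base => simp
    | succ n hmn ih =>
      have step := one_div_sub_one_div_mul_le (g_pos hmn)
        (hg hmn (Set.mem_Ici.mpr (by lia)) n.le_succ) (ha n hmn)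
      rw [sum_Icc_succ_top (by lia), sum_Icc_succ_top (by lia), add_div]
      linear_combination ih + step
  have last_le : (∑ k ∈ Icc m n, a k) / g n ≤ 1 + C / g n := by
    rw [← div_self (g_pos hmn).ne', ← add_div]
    exact div_le_div_of_nonneg_right (ha n hmn) (g_pos hmn).le
  linarith

theorem exists_sum_one_div_primesLE_le :
    ∃ C : ℝ, ∀ n : ℕ, 2 ≤ n → ∑ p ∈ n.primesLE, 1 / (p : ℝ) ≤ Real.log (Real.log n) + C := by
  have h_mertens (k : ℕ) (hk : k ≥ 2) :
      ∑ i ∈ Icc 2 k, Λ i / i ≤ Real.log k + (Real.log 4 + 4) := by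
    refine le_trans ?_ (sum_vonMangoldt_div_le (by lia))
    refine sum_le_sum_of_subset_of_nonneg (fun i hi => ?_) fun i _ _ => ?_
    · simp only [mem_Icc, mem_Ioc] at hi ⊢; lia
    · exact div_nonneg vonMangoldt_nonneg i.cast_nonneg
  have log_mono : MonotoneOn (fun k : ℕ => Real.log k) (Set.Ici 2) := fun i hi j _ hij =>
    Real.log_le_log (mod_cast zero_lt_two.trans_le hi) (mod_cast hij)
  refine ⟨_, fun n hn => le_trans ?_
    (sum_div_le_log_of_sum_le (Real.log_pos (by norm_num)) log_mono h_mertens hn)⟩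
  rw [Nat.primesLE_eq_filter_Icc_two, sum_filter]
  refine sum_le_sum fun p _ => ?_
  split_ifs with hp
  · have : Real.log p ≠ 0 := (Real.log_pos (mod_cast hp.one_lt)).ne'
    rw [vonMangoldt_apply_prime hp, div_right_comm, div_self this]
  · exact div_nonneg (div_nonneg vonMangoldt_nonneg p.cast_nonneg) (Real.log_natCast_nonneg p)

end Mertens

section Totient

open Finset

theorem natCast_div_totient {n : ℕ} (hn : n ≠ 0) :
    (n : ℝ) / n.totient = ∏ p ∈ n.primeFactors, (1 - 1 / (p : ℝ))⁻¹ := by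
  have h : (n.totient : ℝ) = n * ∏ p ∈ n.primeFactors, (1 - 1 / (p : ℝ)) := by
    simpa using congrArg (Rat.cast (K := ℝ)) n.totient_eq_mul_prod_factors
  rw [h, prod_inv_distrib, div_mul_cancel_left₀ (Nat.cast_ne_zero.mpr hn)]

theorem inv_one_sub_one_div_le_exp {x : ℝ} (hx : 2 ≤ x) :
    (1 - 1 / x)⁻¹ ≤ Real.exp (1 / x + 2 / x ^ 2) := by
  refine le_trans ?_ (Real.add_one_le_exp _)
  rw [inv_le_iff_one_le_mul₀ (by rw [sub_pos, div_lt_one] <;> linarith)]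
  have h : (1 / x + 2 / x ^ 2 + 1) * (1 - 1 / x) = 1 + (x - 2) / x ^ 3 := by field_simp; ring
  rw [h, le_add_iff_nonneg_right]
  exact div_nonneg (by linarith) (by positivity)

theorem exists_div_totient_le_exp_sum_one_div :
    ∃ C > 0, ∀ n : ℕ, n ≠ 0 →
      (n : ℝ) / n.totient ≤ C * Real.exp (∑ p ∈ n.primeFactors, 1 / (p : ℝ)) := by
  have h_summable : Summable fun k : ℕ => 2 / (k : ℝ) ^ 2 := by
    simpa [div_eq_mul_inv] using (Real.summable_nat_pow_inv.mpr one_lt_two).mul_left 2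
  refine ⟨Real.exp (∑' k : ℕ, 2 / (k : ℝ) ^ 2), Real.exp_pos _, fun n hn => ?_⟩
  calc (n : ℝ) / n.totient
      = ∏ p ∈ n.primeFactors, (1 - 1 / (p : ℝ))⁻¹ := natCast_div_totient hn
    _ ≤ ∏ p ∈ n.primeFactors, Real.exp (1 / (p : ℝ) + 2 / (p : ℝ) ^ 2) := by
        refine prod_le_prod (fun p _ => ?_) fun p hp => ?_
        · exact inv_nonneg.mpr (sub_nonneg.mpr (by simpa using Nat.cast_inv_le_one p))
        · exact inv_one_sub_one_div_le_exp (mod_cast (Nat.prime_of_mem_primeFactors hp).two_le)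
    _ = Real.exp (∑ p ∈ n.primeFactors, 2 / (p : ℝ) ^ 2) *
          Real.exp (∑ p ∈ n.primeFactors, 1 / (p : ℝ)) := by
        rw [← Real.exp_sum, sum_add_distrib, add_comm, Real.exp_add]
    _ ≤ _ := by
        gcongr
        exact h_summable.sum_le_tsum _ fun _ _ => by positivity

theorem card_primeFactors_mul_log_two_le {n : ℕ} (hn : n ≠ 0) :
    #n.primeFactors * Real.log 2 ≤ Real.log n := by
  have h : 2 ^ #n.primeFactors ≤ n :=
    (pow_card_le_prod _ _ _ fun p hp => (Nat.prime_of_mem_primeFactors hp).two_le).trans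
      (Nat.le_of_dvd (Nat.pos_of_ne_zero hn) n.prod_primeFactors_dvd)
  rw [← Real.log_pow]
  exact Real.log_le_log (by positivity) (mod_cast h)

theorem sum_primeFactors_one_div_le (n : ℕ) {m : ℕ} (hm : 0 < m) :
    ∑ p ∈ n.primeFactors, 1 / (p : ℝ) ≤
      ∑ p ∈ m.primesLE, 1 / (p : ℝ) + (#n.primeFactors : ℝ) / m := by
  rw [← sum_filter_add_sum_filter_not n.primeFactors (· ≤ m)]
  gcongr ?_ + ?_
  · refine sum_le_sum_of_subset_of_nonneg (fun p hp => ?_) fun _ _ _ => by positivity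
    obtain ⟨hp, hpm⟩ := mem_filter.mp hp
    exact Nat.mem_primesLE.mpr ⟨hpm, Nat.prime_of_mem_primeFactors hp⟩
  · calc ∑ p ∈ n.primeFactors with ¬p ≤ m, 1 / (p : ℝ)
        ≤ #{p ∈ n.primeFactors | ¬p ≤ m} • (1 / (m : ℝ)) := by
          refine sum_le_card_nsmul _ _ _ fun p hp => ?_
          have hpm : m ≤ p := (not_le.mp (mem_filter.mp hp).2).le
          gcongr
      _ ≤ (#n.primeFactors : ℝ) / m := by
          rw [nsmul_eq_mul, mul_one_div]
          gcongr
          exact filter_subset _ _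

theorem one_lt_log_three : 1 < Real.log 3 :=
  (Real.lt_log_iff_exp_lt (by norm_num)).mpr Real.exp_one_lt_three

theorem log_mul_le {b c x : ℝ} (hb : 1 < b) (hc : 1 ≤ c) (hx : b ≤ x) :
    Real.log (c * x) ≤ (1 + Real.log c / Real.log b) * Real.log x := by
  have hb_log : 0 < Real.log b := Real.log_pos hb
  calc Real.log (c * x) = Real.log x + Real.log c / Real.log b * Real.log b := by
        rw [Real.log_mul (by linarith) (by linarith), div_mul_cancel₀ _ hb_log.ne', add_comm]
    _ ≤ Real.log x + Real.log c / Real.log b * Real.log x := by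
        have := Real.log_nonneg hc
        gcongr
    _ = (1 + Real.log c / Real.log b) * Real.log x := by ring

theorem exists_sum_primeFactors_one_div_le :
    ∃ C : ℝ, ∀ n : ℕ, 3 ≤ n →
      ∑ p ∈ n.primeFactors, 1 / (p : ℝ) ≤ Real.log (Real.log (2 * Real.log n)) + C := by
  obtain ⟨C, hC⟩ := exists_sum_one_div_primesLE_le
  refine ⟨C + 1 / Real.log 2, fun n hn => ?_⟩
  have log_gt_one : 1 < Real.log n :=
    one_lt_log_three.trans_le (Real.log_le_log (by norm_num) (mod_cast hn))
  have log_two_pos : 0 < Real.log 2 := Real.log_pos one_lt_two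
  set m := ⌈Real.log n⌉₊
  have two_le_m : 2 ≤ m := Nat.lt_ceil.mpr (mod_cast log_gt_one)
  have m_gt_one : (1 : ℝ) < m := mod_cast two_le_m
  have log_le_m : Real.log n ≤ m := Nat.le_ceil _
  have m_le : (m : ℝ) ≤ 2 * Real.log n := by
    linarith [Nat.ceil_lt_add_one (zero_le_one.trans log_gt_one.le)]
  have card_div_le : (#n.primeFactors : ℝ) / m ≤ 1 / Real.log 2 := by
    rw [div_le_div_iff₀ (by linarith) log_two_pos, one_mul]
    exact (card_primeFactors_mul_log_two_le (by lia)).trans log_le_m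
  have log_log_le : Real.log (Real.log m) ≤ Real.log (Real.log (2 * Real.log n)) := by
    have := Real.log_pos m_gt_one
    gcongr
  linarith [sum_primeFactors_one_div_le n (show 0 < m by lia), hC m two_le_m]

theorem exists_div_totient_le_log_log :
    ∃ C > 0, ∀ n : ℕ, 3 ≤ n → (n : ℝ) / n.totient ≤ C * Real.log (Real.log n) := by
  obtain ⟨A, hA, h_ratio⟩ := exists_div_totient_le_exp_sum_one_div
  obtain ⟨C, h_sum⟩ := exists_sum_primeFactors_one_div_le
  have := Real.log_pos one_lt_log_three
  have := Real.log_pos one_lt_two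
  refine ⟨A * (Real.exp C * (1 + Real.log 2 / Real.log (Real.log 3))), by positivity,
    fun n hn => ?_⟩
  have log_three_le : Real.log 3 ≤ Real.log n := Real.log_le_log (by norm_num) (mod_cast hn)
  have log_pos : 0 < Real.log (2 * Real.log n) :=
    Real.log_pos (by linarith [one_lt_log_three])
  calc (n : ℝ) / n.totient
      ≤ A * Real.exp (∑ p ∈ n.primeFactors, 1 / (p : ℝ)) := h_ratio n (by lia)
    _ ≤ A * Real.exp (Real.log (Real.log (2 * Real.log n)) + C) := by
        gcongr
        exact h_sum n hn
    _ = A * (Real.exp C * Real.log (2 * Real.log n)) := by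
        rw [Real.exp_add, Real.exp_log log_pos, mul_comm (Real.log _)]
    _ ≤ A * (Real.exp C *
          ((1 + Real.log 2 / Real.log (Real.log 3)) * Real.log (Real.log n))) := by
        gcongr
        exact log_mul_le one_lt_log_three one_le_two log_three_le
    _ = _ := by ring

theorem exists_div_totient_le_log_log_of_le_pow (k : ℕ) (hk : 1 ≤ k) :
    ∃ C > 0, ∀ n d : ℕ, 3 ≤ n → 3 ≤ d → n ≤ d ^ k →
      (n : ℝ) / n.totient ≤ C * Real.log (Real.log d) := by
  obtain ⟨C, hC, h_ratio⟩ := exists_div_totient_le_log_log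
  have := Real.log_pos one_lt_log_three
  have one_le_k : (1 : ℝ) ≤ k := mod_cast hk
  have := Real.log_nonneg one_le_k
  refine ⟨C * (1 + Real.log k / Real.log (Real.log 3)), by positivity, fun n d hn hd hnd => ?_⟩
  have log_n_pos : 0 < Real.log n := Real.log_pos (mod_cast (by lia : 1 < n))
  have log_le : Real.log n ≤ k * Real.log d := by
    rw [← Real.log_pow]
    exact Real.log_le_log (by positivity) (mod_cast hnd)
  calc (n : ℝ) / n.totient ≤ C * Real.log (Real.log n) := h_ratio n hn
    _ ≤ C * Real.log (k * Real.log d) := by gcongr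
    _ ≤ C * ((1 + Real.log k / Real.log (Real.log 3)) * Real.log (Real.log d)) := by
        gcongr
        exact log_mul_le one_lt_log_three one_le_k
          (Real.log_le_log (by norm_num) (mod_cast hd))
    _ = _ := by ring

end Totient

section LocalFactors

open Finset

theorem nu_le_three (d' d q : ℕ) : nu d' d q ≤ 3 := card_le_three

theorem one_le_nu (d' d q : ℕ) : 1 ≤ nu d' d q := card_pos.mpr (insert_nonempty _ _)

theorem nu_le_self (d' d q : ℕ) [NeZero q] : nu d' d q ≤ q := by
  simpa [nu, ZMod.card] using
    card_le_univ ({(0 : ZMod q), (d' : ZMod q), (d : ZMod q)} : Finset (ZMod q))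

theorem two_le_nu (d' : ℕ) {d q : ℕ} (h : ¬q ∣ d) : 2 ≤ nu d' d q := by
  have h_ne : (0 : ZMod q) ≠ d := fun h0 => h ((ZMod.natCast_eq_zero_iff d q).mp h0.symm)
  rw [← card_pair h_ne]
  exact card_le_card (insert_subset_insert _ (subset_insert _ _))

theorem nu_eq_three {d' d q : ℕ} (hd : d' ≤ d) (h : ¬q ∣ d * d' * (d - d')) :
    nu d' d q = 3 := by
  refine card_eq_three.mpr ⟨0, d', d, fun h0 => h ?_, fun h0 => h ?_, fun h0 => h ?_, rfl⟩
  · exact (((ZMod.natCast_eq_zero_iff d' q).mp h0.symm).mul_left d).mul_right _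
  · exact (((ZMod.natCast_eq_zero_iff d q).mp h0.symm).mul_right d').mul_right _
  · exact ((Nat.modEq_iff_dvd' hd).mp ((ZMod.natCast_eq_natCast_iff d' d q).mp h0)).mul_left _

theorem three_sub_nu_le {d' d : ℕ} (hd : d' ≤ d) (q : ℕ) :
    3 - nu d' d q ≤ (if q ∣ d * d' * (d - d') then 1 else 0) + (if q ∣ d then 1 else 0) := by
  by_cases hqd : q ∣ d
  · have hqD : q ∣ d * d' * (d - d') := (hqd.mul_right d').mul_right _
    rw [if_pos hqD, if_pos hqd]
    have := one_le_nu d' d q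
    lia
  · have := two_le_nu d' hqd
    split_ifs with hqD
    · lia
    · rw [nu_eq_three hd hqD]

theorem inv_pow_mul_one_sub_mul_le {x : ℝ} {k n : ℕ} (hx1 : x < 1) (hkn : k ≤ n) :
    ((1 - x) ^ n)⁻¹ * (1 - k * x) ≤ (1 - x)⁻¹ ^ (n - k) := by
  have h_pos : 0 < 1 - x := sub_pos.mpr hx1
  have h_bernoulli : 1 - k * x ≤ (1 - x) ^ k := by
    simpa [sub_eq_add_neg] using one_add_mul_le_pow (a := -x) (by linarith) k
  calc ((1 - x) ^ n)⁻¹ * (1 - k * x) ≤ ((1 - x) ^ n)⁻¹ * (1 - x) ^ k := by gcongr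
    _ = (1 - x)⁻¹ ^ (n - k) := by
        rw [inv_pow, pow_sub₀ _ h_pos.ne' hkn, mul_inv, inv_inv]

/-- The local factor at the prime `q` of the Euler product for `n / φ(n)`, written as a power of
`(1 - 1/q)⁻¹` so that multiplying two of them adds the exponents. -/
noncomputable def totientRatioFactor (n q : ℕ) : ℝ :=
  (1 - 1 / (q : ℝ))⁻¹ ^ (if q ∣ n then 1 else 0)

theorem one_le_inv_one_sub_one_div {x : ℝ} (hx : 1 < x) : 1 ≤ (1 - 1 / x)⁻¹ := by
  have h_lt : 1 / x < 1 := (div_lt_one (by positivity)).mpr hx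
  exact (one_le_inv₀ (sub_pos.mpr h_lt)).mpr (sub_le_self _ (by positivity))

theorem one_le_totientRatioFactor (n : ℕ) {q : ℕ} (hq : 1 < q) : 1 ≤ totientRatioFactor n q :=
  one_le_pow₀ (one_le_inv_one_sub_one_div (mod_cast hq))

theorem prod_totientRatioFactor_le {n : ℕ} (hn : n ≠ 0) (s : Finset Nat.Primes) :
    ∏ q ∈ s, totientRatioFactor n q ≤ (n : ℝ) / n.totient := by
  set t : Finset ℕ := s.map ⟨(↑), Nat.Primes.coe_nat_injective⟩
  have h_subset : t.filter (· ∣ n) ⊆ n.primeFactors := by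
    intro p hp
    obtain ⟨hps, hpn⟩ := mem_filter.mp hp
    obtain ⟨q, -, rfl⟩ := mem_map.mp hps
    exact Nat.mem_primeFactors.mpr ⟨q.2, hpn, hn⟩
  have one_le {p : ℕ} (hp : p ∈ n.primeFactors) : 1 ≤ (1 - 1 / (p : ℝ))⁻¹ :=
    one_le_inv_one_sub_one_div (mod_cast (Nat.prime_of_mem_primeFactors hp).one_lt)
  calc ∏ q ∈ s, totientRatioFactor n q
      = ∏ p ∈ t with p ∣ n, (1 - 1 / (p : ℝ))⁻¹ := by
        simp only [t, prod_filter, prod_map, totientRatioFactor, pow_ite, pow_one, pow_zero]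
        rfl
    _ ≤ ∏ p ∈ n.primeFactors, (1 - 1 / (p : ℝ))⁻¹ :=
        prod_le_prod_of_subset_of_one_le h_subset
          (fun _ hp => zero_le_one.trans (one_le (h_subset hp))) fun _ hp _ => one_le hp
    _ = (n : ℝ) / n.totient := (natCast_div_totient hn).symm

theorem tripleSingularSeries_factor_nonneg (d' d q : ℕ) [NeZero q] :
    0 ≤ ((1 - 1 / (q : ℝ)) ^ 3)⁻¹ * (1 - (nu d' d q : ℝ) / q) := by
  have h_inv : 0 ≤ 1 - 1 / (q : ℝ) := sub_nonneg.mpr (by simpa using Nat.cast_inv_le_one q)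
  have h_nu : (nu d' d q : ℝ) / q ≤ 1 :=
    div_le_one_of_le₀ (mod_cast nu_le_self d' d q) q.cast_nonneg
  exact mul_nonneg (by positivity) (sub_nonneg.mpr h_nu)

theorem tripleSingularSeries_factor_le {d' d q : ℕ} (hd : d' ≤ d) (hq : 1 < q) :
    ((1 - 1 / (q : ℝ)) ^ 3)⁻¹ * (1 - (nu d' d q : ℝ) / q) ≤
      totientRatioFactor (d * d' * (d - d')) q * totientRatioFactor d q := by
  have h_lt : 1 / (q : ℝ) < 1 := by
    rw [one_div]
    exact inv_lt_one_of_one_lt₀ (mod_cast hq)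
  calc ((1 - 1 / (q : ℝ)) ^ 3)⁻¹ * (1 - (nu d' d q : ℝ) / q)
      = ((1 - 1 / (q : ℝ)) ^ 3)⁻¹ * (1 - nu d' d q * (1 / q)) := by rw [mul_one_div]
    _ ≤ (1 - 1 / (q : ℝ))⁻¹ ^ (3 - nu d' d q) :=
        inv_pow_mul_one_sub_mul_le h_lt (nu_le_three d' d q)
    _ ≤ _ := by
        rw [totientRatioFactor, totientRatioFactor, ← pow_add]
        exact pow_le_pow_right₀ (one_le_inv_one_sub_one_div (mod_cast hq)) (three_sub_nu_le hd q)

end LocalFactors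

theorem tripleSingularSeries_le_div_totient {d' d : ℕ} (hd' : 1 ≤ d') (hd : d' < d) :
    tripleSingularSeries d' d ≤
      ((d * d' * (d - d') : ℕ) : ℝ) / (d * d' * (d - d')).totient * ((d : ℝ) / d.totient) := by
  have hd0 : d ≠ 0 := by lia
  have hD : d * d' * (d - d') ≠ 0 := mul_ne_zero (mul_ne_zero hd0 (by lia)) (by lia)
  have (q : Nat.Primes) : NeZero (q : ℕ) := ⟨q.2.ne_zero⟩
  have one_le_ratio {n : ℕ} (hn : n ≠ 0) : 1 ≤ (n : ℝ) / n.totient := by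
    simpa using prod_totientRatioFactor_le hn ∅
  refine tprod_le_of_prod_le' (one_le_mul_of_one_le_of_one_le (one_le_ratio hD) (one_le_ratio hd0))
    fun s => ?_
  calc ∏ q ∈ s, ((1 - 1 / ((q : ℕ) : ℝ)) ^ 3)⁻¹ * (1 - (nu d' d q : ℝ) / ((q : ℕ) : ℝ))
      ≤ ∏ q ∈ s, totientRatioFactor (d * d' * (d - d')) q * totientRatioFactor d q :=
        Finset.prod_le_prod (fun q _ => tripleSingularSeries_factor_nonneg d' d q)
          fun q _ => tripleSingularSeries_factor_le hd.le q.2.one_lt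
    _ = (∏ q ∈ s, totientRatioFactor (d * d' * (d - d')) q) * ∏ q ∈ s, totientRatioFactor d q :=
        Finset.prod_mul_distrib
    _ ≤ _ := by
        refine mul_le_mul (prod_totientRatioFactor_le hD s) (prod_totientRatioFactor_le hd0 s)
          (Finset.prod_nonneg fun q _ => ?_) (by positivity)
        exact zero_le_one.trans (one_le_totientRatioFactor d q.2.one_lt)

/-- Sharp bound for the triple singular series: `𝔖({0,d',d}) ≪ (log log d)²`. -/
theorem tripleSingularSeries_le_loglog_sq :
    ∃ C : ℝ, 0 < C ∧ ∀ d' d : ℕ, 1 ≤ d' → d' < d → 3 ≤ d →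
      tripleSingularSeries d' d ≤ C * (Real.log (Real.log d)) ^ 2 := by
  obtain ⟨C, hC, h_ratio⟩ := exists_div_totient_le_log_log_of_le_pow 3 (by norm_num)
  refine ⟨C ^ 2, by positivity, fun d' d hd' hd hd3 => ?_⟩
  have three_le_D : 3 ≤ d * d' * (d - d') :=
    hd3.trans <| (Nat.le_mul_of_pos_right d hd').trans <|
      Nat.le_mul_of_pos_right _ (Nat.sub_pos_of_lt hd)
  have D_le : d * d' * (d - d') ≤ d ^ 3 := by
    calc d * d' * (d - d') ≤ d * d * d := by gcongr; exact Nat.sub_le d d'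
      _ = d ^ 3 := by ring
  have ratio_D := h_ratio _ d three_le_D hd3 D_le
  have ratio_d := h_ratio d d hd3 hd3 (Nat.le_self_pow three_ne_zero d)
  calc tripleSingularSeries d' d
      ≤ ((d * d' * (d - d') : ℕ) : ℝ) / (d * d' * (d - d')).totient * ((d : ℝ) / d.totient) :=
        tripleSingularSeries_le_div_totient hd' hd
    _ ≤ C * Real.log (Real.log d) * (C * Real.log (Real.log d)) :=
        mul_le_mul ratio_D ratio_d (by positivity) (le_trans (by positivity) ratio_D)
    _ = C ^ 2 * Real.log (Real.log d) ^ 2 := by ring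
end
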